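/- arXiv:1310.1654 — 2 statements merged into one kernel-verified Lean document; each statement's English description precedes it below -/
import Mathlib

section
/- There exist universal constants c > 0, C > 0, γ₁ > 0, γ₂ > 0 such that for all sufficiently large n the following holds. Let k be a positive integer with k ≤ n/32, set s = ⌊c·n/(√k·√(log n))⌋, let v ∈ ℝⁿ be a nonzero vector, let v_s be a best s-sparse approximation of v, let ṽ₁, …, ṽ_k be independent standard Gaussian random vectors in ℝⁿ, let W = span{v, ṽ₁, …, ṽ_k}, and fix an index i* with |v(i*)| = ‖v‖_∞. Then with probability at least 1 − γ₁·e^{−γ₂·n/2} − k·e^{−⌊c·√(n/log n)⌋} − k/n², every minimizer z# of ‖z‖₁ over the set {z ∈ W : z(i*) = 1} satisfies ‖z# − v/v(i*)‖₂ ≤ C·(√(k·log n)/√n)·‖v − v_s‖₁/‖v‖_∞. -/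
/-!
Normalise `v` so that `v(i*) = ‖v‖_∞ = 1`, and let `G` be the Gaussian matrix with columns `ṽⱼ`.
A feasible point has the form `z = (1 - t) v + G β` with `t = (G β)(i*)`, so the error is
`z - v = G β - t v`. Three facts hold with high probability:

* `‖G β‖₂ ≤ 8 √n ‖β‖` for all `β` (`l2_comb_le`);
* `‖α v + G β‖₁ ≥ (n / 50) ‖β‖` for all `α` and `β` (`l1_comb_ge`);
* the `i*`-th row of `G` has entries at most `4 √(log n)`, whence `|t| ≤ 4 √(k log n) ‖β‖`.

The first two come from exponential Markov bounds at a single unit vector `β`, for which `G β` is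
again standard Gaussian (`map_comb`), combined with a union bound over a net of the sphere of size
at most `2 ^ n`; this uses `k ≤ n / 32`. The bound for a single vector in the second item is
uniform over deterministic shifts, since the Gaussian density is bounded; this lets the coefficient
`α` be treated by a finite grid.

Given these facts (`recovery_of_good`), let `S` be the set of `s` indices kept in `v_s` and
`σ = ‖v - v_s‖₁`. Minimality gives `‖z‖₁ ≤ ‖v‖₁ ≤ s + σ`. If `s ≤ σ`, the second fact yields
`‖β‖ ≤ 100 σ / n` at once. If `σ ≤ s`, then `‖(G β)_S‖₁ ≤ √s ‖G β‖₂` and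
`|t| ‖v‖₁ ≤ 2 s |t|` are both small multiples of `n ‖β‖` by the choice of `s`, and the usual
null-space-property comparison of `‖z‖₁` with `‖v‖₁` on and off `S` gives `‖β‖ ≤ 200 σ / n`.
In both cases `‖z - v‖₂ ≤ ‖G β‖₂ + |t| ‖v‖₂` with `‖v‖₂ ≤ √n` is the claimed bound.
-/

open MeasureTheory ProbabilityTheory Real

/-- ℓ¹ norm of a vector in ℝⁿ. -/
noncomputable def l1 {n : ℕ} (x : Fin n → ℝ) : ℝ := ∑ i, |x i|

/-- ℓ² (Euclidean) norm of a vector in ℝⁿ. -/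
noncomputable def l2 {n : ℕ} (x : Fin n → ℝ) : ℝ := Real.sqrt (∑ i, (x i) ^ 2)

/-- Law of a standard Gaussian random vector in ℝⁿ (i.i.d. N(0,1) entries). -/
noncomputable def stdGaussianVec (n : ℕ) : Measure (Fin n → ℝ) :=
  Measure.pi fun _ => gaussianReal 0 1

/-- `vs` is a best `s`-sparse approximation of `v`: it keeps `s` entries of `v` of largest
magnitude and sets all other entries to zero. -/
def IsBestSparseApprox {n : ℕ} (s : ℕ) (v vs : Fin n → ℝ) : Prop :=
  ∃ S : Finset (Fin n), S.card = s ∧ (∀ i ∈ S, vs i = v i) ∧ (∀ i ∉ S, vs i = 0) ∧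
    ∀ i ∈ S, ∀ j ∉ S, |v j| ≤ |v i|


/-! ### Linear combinations of independent standard Gaussian vectors -/

instance instProbStdGaussianVec (n : ℕ) : IsProbabilityMeasure (stdGaussianVec n) := by
  unfold stdGaussianVec; infer_instance

lemma charFunDual_stdGaussianVec {n : ℕ} (L : StrongDual ℝ (Fin n → ℝ)) :
    charFunDual (stdGaussianVec n) L
      = Complex.exp (-(∑ i, ((L (Pi.single i 1) : ℝ) : ℂ) ^ 2) / 2) := by
  unfold stdGaussianVec
  rw [charFunDual_pi]
  have : ∀ i : Fin n, charFunDual (gaussianReal 0 1) (L.comp (ContinuousLinearMap.single ℝ (fun _ : Fin n => ℝ) i))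
      = Complex.exp (-((L (Pi.single i 1) : ℝ) : ℂ) ^ 2 / 2) := by
    intro i
    rw [charFunDual_eq_charFun_map_one, gaussianReal_map_continuousLinearMap, charFun_gaussianReal]
    have h0 : 0 ≤ (L (Pi.single i 1)) ^ 2 := sq_nonneg _
    simp [max_eq_left h0, neg_div]
  simp only [this, ← Complex.exp_sum]
  congr 1
  rw [← Finset.sum_div, Finset.sum_neg_distrib]

/-- For a unit vector `β`, the combination `∑ j, β j • ω j` of independent standard Gaussian vectors
is again a standard Gaussian vector. -/
lemma map_comb {n k : ℕ} (β : Fin k → ℝ) (hβ : ∑ j, β j ^ 2 = 1) :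
    (Measure.pi fun _ : Fin k => stdGaussianVec n).map (fun ω => ∑ j, β j • ω j)
      = stdGaussianVec n := by
  have hm : Measurable (fun ω : Fin k → Fin n → ℝ => ∑ j, β j • ω j) := by fun_prop
  have : IsProbabilityMeasure
    ((Measure.pi fun _ : Fin k => stdGaussianVec n).map (fun ω => ∑ j, β j • ω j)) :=
    Measure.isProbabilityMeasure_map hm.aemeasurable
  refine Measure.ext_of_charFunDual ?_
  ext L
  rw [charFunDual_apply, integral_map hm.aemeasurable (by fun_prop)]
  have h1 : ∀ ω : Fin k → Fin n → ℝ, Complex.exp ((L (∑ j, β j • ω j) : ℝ) * Complex.I)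
      = ∏ j, Complex.exp (((β j • L) (ω j) : ℝ) * Complex.I) := by
    intro ω
    rw [← Complex.exp_sum, map_sum, ← Finset.sum_mul]
    simp
  simp_rw [h1]
  rw [integral_fintype_prod_eq_prod (fun j (x : Fin n → ℝ) =>
    Complex.exp (((β j • L) x : ℝ) * Complex.I))]
  simp_rw [← charFunDual_apply, charFunDual_stdGaussianVec, ← Complex.exp_sum]
  congr 1
  rw [← Finset.sum_div]
  congr 1
  have h2 : ∑ j, ((β j : ℝ) : ℂ) ^ 2 = 1 := by exact_mod_cast hβ
  simp only [_root_.smul_apply, smul_eq_mul, Complex.ofReal_mul, mul_pow,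
    Finset.sum_neg_distrib, ← Finset.mul_sum, ← Finset.sum_mul, h2, one_mul]

/-! ### Tail and small-ball estimates for a single Gaussian vector -/

lemma gaussian_integral_exp_sq :
    Integrable (fun x : ℝ => Real.exp (x ^ 2 / 4)) (gaussianReal 0 1) ∧
      ∫ x, Real.exp (x ^ 2 / 4) ∂(gaussianReal 0 1) = √2 := by
  have h0 : ∀ x : ℝ, gaussianPDFReal 0 1 x • Real.exp (x ^ 2 / 4)
      = (√(2 * π))⁻¹ * Real.exp (-(1 / 4) * x ^ 2) := by
    intro x
    simp only [gaussianPDFReal, NNReal.coe_one, mul_one, sub_zero, smul_eq_mul, mul_assoc,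
      ← Real.exp_add]
    ring_nf
  have hi : Integrable (fun x : ℝ => (√(2 * π))⁻¹ * Real.exp (-(1 / 4) * x ^ 2)) :=
    (integrable_exp_neg_mul_sq (by norm_num)).const_mul _
  constructor
  · rw [gaussianReal_of_var_ne_zero _ one_ne_zero,
      integrable_withDensity_iff_integrable_smul' (measurable_gaussianPDF _ _)
        (Filter.Eventually.of_forall fun _ => gaussianPDF_lt_top)]
    simp only [toReal_gaussianPDF, h0]
    exact hi
  · rw [integral_gaussianReal_eq_integral_smul one_ne_zero]
    simp only [h0]
    rw [integral_const_mul, integral_gaussian]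
    rw [← Real.sqrt_inv, ← Real.sqrt_mul (by positivity)]
    congr 1
    field_simp
    norm_num

lemma integral_exp_neg_abs_shift (m : ℝ) :
    Integrable (fun x : ℝ => Real.exp (-20 * |x + m|)) ∧
      ∫ x : ℝ, Real.exp (-20 * |x + m|) = 1 / 10 := by
  have he : ∫ x : ℝ, Real.exp (-20 * |x|) = 1 / 10 := by
    rw [integral_comp_abs (f := fun x => Real.exp (-20 * x)), integral_exp_mul_Ioi (by norm_num)]
    norm_num
  have hi : Integrable (fun x : ℝ => Real.exp (-20 * |x|)) :=
    Integrable.of_integral_ne_zero (by rw [he]; norm_num)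
  exact ⟨hi.comp_add_right m,
    (integral_add_right_eq_self (fun x : ℝ => Real.exp (-20 * |x|)) m).trans he⟩

lemma gaussian_integral_exp_abs (m : ℝ) :
    Integrable (fun x : ℝ => Real.exp (-20 * |x + m|)) (gaussianReal 0 1) ∧
      ∫ x, Real.exp (-20 * |x + m|) ∂(gaussianReal 0 1) ≤ 1 / 20 := by
  obtain ⟨hi, he⟩ := integral_exp_neg_abs_shift m
  refine ⟨?_, ?_⟩
  · refine Integrable.of_bound (by fun_prop) 1 (Filter.Eventually.of_forall fun x => ?_)
    rw [Real.norm_eq_abs, abs_of_pos (Real.exp_pos _)]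
    exact Real.exp_le_one_iff.2 (by nlinarith [abs_nonneg (x + m)])
  · rw [integral_gaussianReal_eq_integral_smul one_ne_zero]
    have hb : ∀ x, gaussianPDFReal 0 1 x ≤ 1 / 2 := by
      intro x
      have h2 : (2 : ℝ) ≤ √(2 * π) := Real.le_sqrt_of_sq_le (by nlinarith [Real.pi_gt_three])
      have h3 : (√(2 * π))⁻¹ ≤ 1 / 2 := by
        rw [one_div]; exact inv_anti₀ (by norm_num) h2
      have h4 : Real.exp (-(x - 0) ^ 2 / (2 * 1)) ≤ 1 :=
        Real.exp_le_one_iff.2 (by nlinarith [sq_nonneg (x - 0)])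
      simp only [gaussianPDFReal, NNReal.coe_one, mul_one] at h4 ⊢
      calc _ ≤ (√(2 * π))⁻¹ * 1 := by gcongr
        _ ≤ _ := by linarith
    calc _ ≤ ∫ x, (1 / 2 : ℝ) * Real.exp (-20 * |x + m|) := by
          refine integral_mono_of_nonneg (Filter.Eventually.of_forall fun x => ?_)
            (hi.const_mul _) (Filter.Eventually.of_forall fun x => ?_)
          · exact mul_nonneg (gaussianPDFReal_nonneg _ _ _) (Real.exp_pos _).le
          · exact mul_le_mul_of_nonneg_right (hb x) (Real.exp_pos _).le
      _ = 1 / 20 := by rw [integral_const_mul, he]; norm_num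

/-- Exponential Markov inequality for a sum of functions of independent coordinates. -/
lemma chernoff_pi {n : ℕ} (f : Fin n → ℝ → ℝ) (K t : ℝ)
    (hi : ∀ i, Integrable (fun x => Real.exp (f i x)) (gaussianReal 0 1))
    (hK : ∀ i, ∫ x, Real.exp (f i x) ∂(gaussianReal 0 1) ≤ K) :
    stdGaussianVec n {u | n * t ≤ ∑ i, f i (u i)} ≤ ENNReal.ofReal ((K * Real.exp (-t)) ^ n) := by
  have hprod_int : Integrable (fun u : Fin n → ℝ => ∏ i, Real.exp (f i (u i))) (stdGaussianVec n) :=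
    Integrable.fintype_prod hi
  have hle : ∫ u, ∏ i, Real.exp (f i (u i)) ∂(stdGaussianVec n) ≤ K ^ n := by
    unfold stdGaussianVec
    rw [integral_fintype_prod_eq_prod (fun i x => Real.exp (f i x))]
    calc _ ≤ ∏ _i : Fin n, K := Finset.prod_le_prod
          (fun i _ => integral_nonneg fun _ => (Real.exp_pos _).le) (fun i _ => hK i)
      _ = K ^ n := by simp
  have hM := mul_meas_ge_le_integral_of_nonneg (μ := stdGaussianVec n)
    (Filter.Eventually.of_forall fun u => Finset.prod_nonneg fun i _ => (Real.exp_pos (f i (u i))).le)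
    hprod_int (Real.exp (n * t))
  have hset : {u : Fin n → ℝ | n * t ≤ ∑ i, f i (u i)}
      = {u | Real.exp (n * t) ≤ ∏ i, Real.exp (f i (u i))} := by
    ext u
    simp [← Real.exp_sum]
  rw [hset, ← ofReal_measureReal]
  refine ENNReal.ofReal_le_ofReal ?_
  have h1 : Real.exp (n * t) * (stdGaussianVec n).real
      {u | Real.exp (n * t) ≤ ∏ i, Real.exp (f i (u i))} ≤ K ^ n := hM.trans hle
  rw [mul_pow, ← Real.exp_nat_mul, mul_neg, Real.exp_neg, ← div_eq_mul_inv,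
    le_div_iff₀ (Real.exp_pos _), mul_comm]
  exact h1

lemma exp_neg_four_sqrt_two : √2 * Real.exp (-4) ≤ 1 / 4 := by
  have h1 : √2 ≤ 2 := by rw [Real.sqrt_le_left (by norm_num)]; norm_num
  have h2 : Real.exp (-4) ≤ 1 / 8 := by
    rw [Real.exp_neg, one_div]
    refine inv_anti₀ (by norm_num) ?_
    have := Real.exp_one_gt_d9
    calc (8 : ℝ) ≤ 2 ^ 4 := by norm_num
      _ ≤ Real.exp 1 ^ 4 := by gcongr; linarith
      _ = Real.exp 4 := by rw [← Real.exp_nat_mul]; norm_num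
  nlinarith [Real.exp_pos (-4)]

/-- Upper tail of the Euclidean norm of a standard Gaussian vector. -/
lemma l2_tail (n : ℕ) :
    stdGaussianVec n {u | 4 * √n < l2 u} ≤ ENNReal.ofReal ((1 / 4) ^ n) := by
  have h := chernoff_pi (n := n) (fun _ x => x ^ 2 / 4) (√2) 4
    (fun _ => gaussian_integral_exp_sq.1) (fun _ => gaussian_integral_exp_sq.2.le)
  refine (measure_mono fun u hu => ?_).trans (h.trans (ENNReal.ofReal_le_ofReal ?_))
  · simp only [Set.mem_ofPred_eq, l2] at hu ⊢
    have h4 : 4 * √(n : ℝ) = √(16 * n) := by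
      rw [Real.sqrt_mul (by norm_num)]; congr 1
      rw [show (16 : ℝ) = 4 ^ 2 by norm_num, Real.sqrt_sq (by norm_num)]
    rw [h4, Real.sqrt_lt_sqrt_iff (by positivity)] at hu
    rw [← Finset.sum_div]; linarith
  · exact pow_le_pow_left₀ (by positivity) exp_neg_four_sqrt_two n

/-- Small-ball estimate, uniform in the shift: Gaussian anti-concentration makes the `ℓ¹` norm
of a shifted standard Gaussian vector of order `n`. -/
lemma l1_small_ball {n : ℕ} (m : Fin n → ℝ) :
    stdGaussianVec n {u | l1 (m + u) < n / 20} ≤ ENNReal.ofReal ((1 / 4) ^ n) := by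
  have h := chernoff_pi (n := n) (fun i x => -20 * |x + m i|) (1 / 20) (-1)
    (fun i => (gaussian_integral_exp_abs (m i)).1) (fun i => (gaussian_integral_exp_abs (m i)).2)
  refine (measure_mono fun u hu => ?_).trans (h.trans (ENNReal.ofReal_le_ofReal ?_))
  · simp only [Set.mem_ofPred_eq, l1, Pi.add_apply] at hu ⊢
    rw [← Finset.mul_sum]
    simp only [add_comm (u _)]
    linarith
  · refine pow_le_pow_left₀ (by positivity) ?_ n
    have := Real.exp_one_lt_d9
    rw [neg_neg]; linarith

/-- Tail of a single Gaussian entry. -/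
lemma entry_tail {n : ℕ} (hn : 2 ≤ n) (i : Fin n) :
    stdGaussianVec n {u | 4 * √(Real.log n) < |u i|} ≤ ENNReal.ofReal (1 / (n : ℝ) ^ 2) := by
  have hn' : (2 : ℝ) ≤ n := by exact_mod_cast hn
  have hlog : 0 ≤ Real.log n := Real.log_nonneg (by linarith)
  have hmp := measurePreserving_eval (fun _ : Fin n => gaussianReal 0 1) i
  have hset : MeasurableSet {x : ℝ | 4 * √(Real.log n) < |x|} :=
    measurableSet_lt measurable_const measurable_norm
  have heq : stdGaussianVec n {u | 4 * √(Real.log n) < |u i|}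
      = gaussianReal 0 1 {x : ℝ | 4 * √(Real.log n) < |x|} :=
    hmp.measure_preimage hset.nullMeasurableSet
  have hM := mul_meas_ge_le_integral_of_nonneg (μ := gaussianReal 0 1)
    (Filter.Eventually.of_forall fun x => (Real.exp_pos (x ^ 2 / 4)).le)
    gaussian_integral_exp_sq.1 ((n : ℝ) ^ 4)
  rw [gaussian_integral_exp_sq.2] at hM
  rw [heq]
  refine (measure_mono (t := {x : ℝ | (n : ℝ) ^ 4 ≤ Real.exp (x ^ 2 / 4)}) fun x hx => ?_).trans ?_
  · simp only [Set.mem_ofPred_eq] at hx ⊢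
    have h1 : (4 * √(Real.log n)) ^ 2 ≤ x ^ 2 := by
      rw [← sq_abs x]; gcongr
    rw [mul_pow, Real.sq_sqrt hlog] at h1
    calc (n : ℝ) ^ 4 = Real.exp (4 * Real.log n) := by
          rw [show (4 : ℝ) = ((4 : ℕ) : ℝ) by norm_num, Real.exp_nat_mul,
            Real.exp_log (by linarith)]
      _ ≤ _ := Real.exp_le_exp.2 (by linarith)
  · rw [← ofReal_measureReal]
    refine ENNReal.ofReal_le_ofReal ?_
    have h2 : √2 ≤ 2 := by rw [Real.sqrt_le_left (by norm_num)]; norm_num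
    have h4 : (2 : ℝ) ≤ n ^ 2 := by nlinarith
    rw [le_div_iff₀ (by positivity)]
    have h5 : (n : ℝ) ^ 2 * ((gaussianReal 0 1).real {x : ℝ | (n : ℝ) ^ 4 ≤ Real.exp (x ^ 2 / 4)}
      * (n : ℝ) ^ 2) ≤ (n : ℝ) ^ 2 * 1 := by
      calc _ = (n : ℝ) ^ 4 *
            (gaussianReal 0 1).real {x : ℝ | (n : ℝ) ^ 4 ≤ Real.exp (x ^ 2 / 4)} := by ring
        _ ≤ _ := by linarith
    exact le_of_mul_le_mul_left h5 (by positivity)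

/-! ### Nets of the unit sphere -/

open Module Metric ENNReal in
/-- Volume bound: an `ε`-separated subset of the unit sphere has at most `(1 + 2 / ε) ^ dim`
elements. -/
lemma card_le_of_separated_sphere {E : Type*} [NormedAddCommGroup E] [NormedSpace ℝ E]
    [FiniteDimensional ℝ E] {ε : ℝ} (hε : 0 < ε) (s : Finset E) (hs : ∀ c ∈ s, ‖c‖ = 1)
    (h : ∀ c ∈ s, ∀ d ∈ s, c ≠ d → ε ≤ ‖c - d‖) :
    (s.card : ℝ) ≤ (1 + 2 / ε) ^ finrank ℝ E := by
  borelize E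
  let μ : Measure E := Measure.addHaar
  have δpos : 0 < ε / 2 := by positivity
  have ρpos : 0 < 1 + ε / 2 := by positivity
  set A := ⋃ c ∈ s, ball (c : E) (ε / 2) with hA
  have D : Set.Pairwise (s : Set E) (Function.onFun Disjoint fun c => ball (c : E) (ε / 2)) := by
    rintro c hc d hd hcd
    apply ball_disjoint_ball
    rw [dist_eq_norm]
    linarith [h c hc d hd hcd]
  have A_subset : A ⊆ ball (0 : E) (1 + ε / 2) := by
    refine Set.iUnion₂_subset fun x hx => ?_
    apply ball_subset_ball'
    rw [dist_zero_right, hs x hx, add_comm]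
  have I : (s.card : ℝ≥0∞) * ENNReal.ofReal ((ε / 2) ^ finrank ℝ E) * μ (ball 0 1) ≤
      ENNReal.ofReal ((1 + ε / 2) ^ finrank ℝ E) * μ (ball 0 1) :=
    calc
      (s.card : ℝ≥0∞) * ENNReal.ofReal ((ε / 2) ^ finrank ℝ E) * μ (ball 0 1) = μ A := by
        rw [hA, measure_biUnion_finset D fun c _ => measurableSet_ball]
        simp only [μ.addHaar_ball_of_pos _ δpos, Finset.sum_const, nsmul_eq_mul, mul_assoc]
      _ ≤ μ (ball (0 : E) (1 + ε / 2)) := measure_mono A_subset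
      _ = ENNReal.ofReal ((1 + ε / 2) ^ finrank ℝ E) * μ (ball 0 1) := by
        simp only [μ.addHaar_ball_of_pos _ ρpos]
  have J : (s.card : ℝ≥0∞) * ENNReal.ofReal ((ε / 2) ^ finrank ℝ E)
      ≤ ENNReal.ofReal ((1 + ε / 2) ^ finrank ℝ E) :=
    (ENNReal.mul_le_mul_iff_left (measure_ball_pos _ _ zero_lt_one).ne' measure_ball_lt_top.ne).1 I
  have K := ENNReal.toReal_le_of_le_ofReal (by positivity) J
  rw [ENNReal.toReal_mul, ENNReal.toReal_natCast, ENNReal.toReal_ofReal (by positivity),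
    ← le_div_iff₀ (by positivity), ← div_pow] at K
  have : (1 + ε / 2) / (ε / 2) = 1 + 2 / ε := by field_simp; ring
  rwa [this] at K

/-- Existence of an `ε`-net of the unit sphere with at most `(1 + 2 / ε) ^ dim` points. -/
lemma exists_sphere_net (E : Type*) [NormedAddCommGroup E] [NormedSpace ℝ E]
    [FiniteDimensional ℝ E] {ε : ℝ} (hε : 0 < ε) :
    ∃ T : Finset E, (∀ x ∈ T, ‖x‖ = 1) ∧ (T.card : ℝ) ≤ (1 + 2 / ε) ^ Module.finrank ℝ E ∧
      ∀ y : E, ‖y‖ = 1 → ∃ x ∈ T, ‖y - x‖ ≤ ε := by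
  classical
  let P : ℕ → Prop := fun N => ∃ T : Finset E, T.card = N ∧ (∀ x ∈ T, ‖x‖ = 1) ∧
    ∀ c ∈ T, ∀ d ∈ T, c ≠ d → ε ≤ ‖c - d‖
  have hP0 : P 0 := ⟨∅, by simp⟩
  have hb : ∀ N, P N → N ≤ ⌊(1 + 2 / ε) ^ Module.finrank ℝ E⌋₊ := by
    rintro N ⟨T, rfl, h1, h2⟩
    exact Nat.le_floor (card_le_of_separated_sphere hε T h1 h2)
  obtain ⟨T, hT, h1, h2⟩ : P (Nat.findGreatest P ⌊(1 + 2 / ε) ^ Module.finrank ℝ E⌋₊) :=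
    Nat.findGreatest_spec (Nat.zero_le _) hP0
  refine ⟨T, h1, card_le_of_separated_sphere hε T h1 h2, fun y hy => ?_⟩
  by_contra! hcon
  have hyT : y ∉ T := fun hyT => by
    have := hcon y hyT
    simp at this
    linarith
  have hP : P (T.card + 1) := by
    refine ⟨insert y T, Finset.card_insert_of_notMem hyT, ?_, ?_⟩
    · intro x hx
      rcases Finset.mem_insert.1 hx with rfl | hx
      exacts [hy, h1 x hx]
    · intro c hc d hd hcd
      rcases Finset.mem_insert.1 hc with rfl | hc' <;>
        rcases Finset.mem_insert.1 hd with rfl | hd'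
      · exact absurd rfl hcd
      · exact (hcon d hd').le
      · rw [norm_sub_rev]; exact (hcon c hc').le
      · exact h2 c hc' d hd' hcd
  have := Nat.le_findGreatest (hb _ hP) hP
  omega

/-! ### Deterministic estimates -/

/-- The linear combination `∑ j, β j • ω j`, i.e. the product `G β` for the matrix `G` with
columns `ω j`. -/
def comb {n k : ℕ} (ω : Fin k → Fin n → ℝ) (β : EuclideanSpace ℝ (Fin k)) : Fin n → ℝ :=
  ∑ j, β j • ω j

lemma l2_eq_norm {n : ℕ} (x : Fin n → ℝ) : l2 x = ‖WithLp.toLp 2 x‖ := by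
  simp [l2, EuclideanSpace.norm_eq]

lemma l2_nonneg {n : ℕ} (x : Fin n → ℝ) : 0 ≤ l2 x := Real.sqrt_nonneg _

lemma l2_sub_le {n : ℕ} (x y : Fin n → ℝ) : l2 (x - y) ≤ l2 x + l2 y := by
  simp only [l2_eq_norm, WithLp.toLp_sub]
  exact norm_sub_le _ _

lemma l2_smul {n : ℕ} (t : ℝ) (x : Fin n → ℝ) : l2 (t • x) = |t| * l2 x := by
  simp only [l2_eq_norm, WithLp.toLp_smul, norm_smul, Real.norm_eq_abs]

lemma l1_add_le {n : ℕ} (x y : Fin n → ℝ) : l1 (x + y) ≤ l1 x + l1 y := by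
  have h : ∑ i, |x i + y i| ≤ ∑ i, (|x i| + |y i|) := by
    gcongr with i
    exact abs_add_le _ _
  rwa [Finset.sum_add_distrib] at h

lemma l1_smul {n : ℕ} (t : ℝ) (x : Fin n → ℝ) : l1 (t • x) = |t| * l1 x := by
  simp [l1, abs_mul, Finset.mul_sum]

lemma l1_nonneg {n : ℕ} (x : Fin n → ℝ) : 0 ≤ l1 x := Finset.sum_nonneg fun _ _ => abs_nonneg _

lemma sum_abs_le_sqrt_card_mul_l2 {n : ℕ} (x : Fin n → ℝ) (S : Finset (Fin n)) :
    ∑ i ∈ S, |x i| ≤ √(S.card) * l2 x := by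
  unfold l2
  rw [← Real.sqrt_mul (by positivity)]
  refine Real.le_sqrt_of_sq_le ?_
  calc (∑ i ∈ S, |x i|) ^ 2 ≤ S.card * ∑ i ∈ S, |x i| ^ 2 := sq_sum_le_card_mul_sum_sq
    _ ≤ S.card * ∑ i, x i ^ 2 := by
      simp only [sq_abs]
      exact mul_le_mul_of_nonneg_left (Finset.sum_le_sum_of_subset_of_nonneg
        (Finset.subset_univ S) fun i _ _ => sq_nonneg (x i)) (Nat.cast_nonneg _)

lemma l1_le_sqrt_mul_l2 {n : ℕ} (x : Fin n → ℝ) : l1 x ≤ √n * l2 x := by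
  simpa [l1] using sum_abs_le_sqrt_card_mul_l2 x Finset.univ

lemma comb_sub {n k : ℕ} (ω : Fin k → Fin n → ℝ) (β γ : EuclideanSpace ℝ (Fin k)) :
    comb ω (β - γ) = comb ω β - comb ω γ := by
  simp [comb, sub_smul, Finset.sum_sub_distrib]

lemma comb_smul {n k : ℕ} (ω : Fin k → Fin n → ℝ) (t : ℝ) (β : EuclideanSpace ℝ (Fin k)) :
    comb ω (t • β) = t • comb ω β := by
  simp [comb, mul_smul, Finset.smul_sum]

/-- An `ℓ²` bound on a `1 / 400`-net of the sphere bounds the operator norm. -/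
lemma l2_comb_le {n k : ℕ} (ω : Fin k → Fin n → ℝ) (T : Finset (EuclideanSpace ℝ (Fin k)))
    (hT : ∀ y : EuclideanSpace ℝ (Fin k), ‖y‖ = 1 → ∃ x ∈ T, ‖y - x‖ ≤ 1 / 400)
    (h : ∀ x ∈ T, l2 (comb ω x) ≤ 4 * √n) (β : EuclideanSpace ℝ (Fin k)) :
    l2 (comb ω β) ≤ 8 * √n * ‖β‖ := by
  let G : EuclideanSpace ℝ (Fin k) →ₗ[ℝ] EuclideanSpace ℝ (Fin n) :=
    { toFun := fun β => WithLp.toLp 2 (comb ω β)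
      map_add' := fun β γ => by
        simp [comb, add_smul, Finset.sum_add_distrib]
      map_smul' := fun t β => by simp [comb_smul] }
  let A := LinearMap.toContinuousLinearMap G
  have hA : ∀ β, ‖A β‖ = l2 (comb ω β) := fun β => (l2_eq_norm _).symm
  have hn := Real.sqrt_nonneg (n : ℝ)
  have key : ‖A‖ ≤ 4 * √n + ‖A‖ * (1 / 400) := by
    refine A.opNorm_le_of_unit_norm (by positivity) fun y hy => ?_
    obtain ⟨x, hx, hyx⟩ := hT y hy
    calc ‖A y‖ = ‖A x + A (y - x)‖ := by rw [← map_add, add_sub_cancel]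
      _ ≤ ‖A x‖ + ‖A (y - x)‖ := norm_add_le _ _
      _ ≤ 4 * √n + ‖A‖ * (1 / 400) := by
        refine add_le_add ((hA x).trans_le (h x hx)) ((A.le_opNorm _).trans ?_)
        gcongr
  rw [← hA]
  refine (A.le_opNorm β).trans ?_
  gcongr
  linarith

/-- Passage from a net to all parameters for the lower `ℓ¹` bound. The coefficient of `v` is
discretised as well: only the range `|α| ‖v‖₁ ≤ 9 n` matters, since for larger `α` the term
`α v` dominates. -/
lemma l1_comb_ge {n k : ℕ} (hn : 0 < n) (ω : Fin k → Fin n → ℝ)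
    (T : Finset (EuclideanSpace ℝ (Fin k)))
    (hT : ∀ y : EuclideanSpace ℝ (Fin k), ‖y‖ = 1 → ∃ x ∈ T, ‖y - x‖ ≤ 1 / 400)
    (hop : ∀ β, l2 (comb ω β) ≤ 8 * √n * ‖β‖) (v : Fin n → ℝ) (hv : 0 < l1 v)
    (h : ∀ x ∈ T, ∀ j ∈ Finset.Icc (-901 : ℤ) 901,
      (n : ℝ) / 20 ≤ l1 (((j : ℝ) / 100 * (n / l1 v)) • v + comb ω x))
    (α : ℝ) (β : EuclideanSpace ℝ (Fin k)) :
    n / 50 * ‖β‖ ≤ l1 (α • v + comb ω β) := by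
  have hn' : (0 : ℝ) < n := by exact_mod_cast hn
  have hl1 : ∀ β, l1 (comb ω β) ≤ 8 * n * ‖β‖ := fun β => by
    refine (l1_le_sqrt_mul_l2 _).trans ?_
    calc √n * l2 (comb ω β) ≤ √n * (8 * √n * ‖β‖) := by gcongr; exact hop β
      _ = 8 * (√n * √n) * ‖β‖ := by ring
      _ = 8 * n * ‖β‖ := by rw [Real.mul_self_sqrt hn'.le]
  -- It suffices to treat unit `β`, by homogeneity.
  have unit : ∀ (α : ℝ) (β : EuclideanSpace ℝ (Fin k)), ‖β‖ = 1 →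
      n / 50 ≤ l1 (α • v + comb ω β) := by
    intro α β hβ
    by_cases hα : |α| * l1 v ≤ 9 * n
    · obtain ⟨x, hx, hxβ⟩ := hT β hβ
      set a := α * l1 v / n with ha
      have ha9 : |a| ≤ 9 := by
        rw [ha, abs_div, abs_mul, abs_of_pos hv, abs_of_pos hn', div_le_iff₀ hn']
        exact hα
      set j := ⌊100 * a⌋ with hj
      have hj1 : (j : ℝ) ≤ 100 * a := Int.floor_le _
      have hj2 : 100 * a < j + 1 := Int.lt_floor_add_one _
      have ⟨ha1, ha2⟩ := abs_le.1 ha9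
      have hjmem : j ∈ Finset.Icc (-901 : ℤ) 901 := by
        rw [Finset.mem_Icc]
        constructor
        · have : (-901 : ℝ) ≤ j := by linarith
          exact_mod_cast this
        · have : (j : ℝ) ≤ 901 := by linarith
          exact_mod_cast this
      have hα' : α = a * (n / l1 v) := by rw [ha]; field_simp
      have hsplit : ((j : ℝ) / 100 * (n / l1 v)) • v + comb ω x
          = (α • v + comb ω β) + ((((j : ℝ) / 100 - a) * (n / l1 v)) • v + comb ω (x - β)) := by
        rw [comb_sub, hα']
        module
      have h1 := h x hx j hjmem
      rw [hsplit] at h1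
      have h2 := l1_add_le (α • v + comb ω β)
        ((((j : ℝ) / 100 - a) * (n / l1 v)) • v + comb ω (x - β))
      have h3 := l1_add_le ((((j : ℝ) / 100 - a) * (n / l1 v)) • v) (comb ω (x - β))
      have h4 := hl1 (x - β)
      rw [norm_sub_rev] at h4
      have h5 : l1 ((((j : ℝ) / 100 - a) * (n / l1 v)) • v) ≤ n / 100 := by
        rw [l1_smul, abs_mul, abs_of_pos (div_pos hn' hv), mul_assoc, div_mul_cancel₀ _ hv.ne']
        have : |(j : ℝ) / 100 - a| ≤ 1 / 100 := by
          rw [abs_le]; constructor <;> linarith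
        nlinarith
      have h6 : 8 * n * ‖β - x‖ ≤ n / 50 := by nlinarith
      linarith
    · push Not at hα
      have h1 := l1_add_le (α • v + comb ω β) ((-1 : ℝ) • comb ω β)
      rw [show (α • v + comb ω β) + (-1 : ℝ) • comb ω β = α • v by module, l1_smul, l1_smul] at h1
      have h2 := hl1 β
      rw [hβ] at h2
      norm_num at h1
      linarith
  rcases eq_or_ne β 0 with rfl | hβ
  · simpa using l1_nonneg _
  · have hb : 0 < ‖β‖ := norm_pos_iff.2 hβ
    have h1 := unit (‖β‖⁻¹ * α) (‖β‖⁻¹ • β) (by simp [norm_smul, hb.ne'])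
    rw [comb_smul, mul_smul, ← smul_add, l1_smul, abs_of_pos (inv_pos.2 hb)] at h1
    rw [inv_mul_eq_div, le_div_iff₀ hb] at h1
    exact h1

/-- The deterministic recovery bound, for `v` normalised so that `v(i*) = ‖v‖_∞ = 1`: on the event where
the Gaussian matrix satisfies the operator-norm, lower `ℓ¹` and row bounds, a feasible point of `ℓ¹`
norm at most `‖v‖₁` is close to `v`. -/
lemma recovery_of_good {n k : ℕ} (hlog : 1 ≤ Real.log n) (hk : 0 < k)
    (ω : Fin k → Fin n → ℝ) (v : Fin n → ℝ) (istar : Fin n)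
    (hvi : v istar = 1) (hv1 : ∀ i, |v i| ≤ 1)
    (hop : ∀ β, l2 (comb ω β) ≤ 8 * √n * ‖β‖)
    (hlow : ∀ (α : ℝ) β, n / 50 * ‖β‖ ≤ l1 (α • v + comb ω β))
    (ha : ∀ j, |ω j istar| ≤ 4 * √(Real.log n))
    (S : Finset (Fin n)) (hS : (S.card : ℝ) ≤ 1 / 10 ^ 8 * n / (√k * √(Real.log n)))
    (α : ℝ) (β : EuclideanSpace ℝ (Fin k)) (hz : (α • v + comb ω β) istar = 1)
    (hmin : l1 (α • v + comb ω β) ≤ l1 v) :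
    l2 (α • v + comb ω β - v) ≤ 2400 * (√(k * Real.log n) / √n) * ∑ i ∈ Sᶜ, |v i| := by
  set σ := ∑ i ∈ Sᶜ, |v i| with hσ
  set u := comb ω β with hu
  set t := comb ω β istar with ht
  set q := √(k * Real.log n) with hq
  set b := ‖β‖ with hb
  have hb0 : 0 ≤ b := norm_nonneg _
  have hσ0 : 0 ≤ σ := Finset.sum_nonneg fun _ _ => abs_nonneg _
  have hk1 : (1 : ℝ) ≤ k := by exact_mod_cast hk
  have hnpos : 0 < n := istar.pos
  have hn : (0 : ℝ) < n := by exact_mod_cast hnpos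
  have hsn : 0 < √(n : ℝ) := Real.sqrt_pos.2 hn
  have hss : √(n : ℝ) * √n = n := Real.mul_self_sqrt hn.le
  have hq1 : 1 ≤ q := by
    rw [hq, Real.one_le_sqrt]; nlinarith
  rw [← Real.sqrt_mul (by positivity), ← hq] at hS
  have hα : α = 1 - t := by
    simp only [Pi.add_apply, Pi.smul_apply, smul_eq_mul, hvi] at hz
    linarith
  have htb : |t| ≤ 4 * q * b := by
    have h1 : t = ∑ j, β j * ω j istar := by simp [ht, comb]
    have h2 : t ^ 2 ≤ (4 * q * b) ^ 2 := by
      rw [h1]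
      calc _ ≤ (∑ j, β j ^ 2) * ∑ j, ω j istar ^ 2 := Finset.sum_mul_sq_le_sq_mul_sq _ _ _
        _ ≤ (∑ j, β j ^ 2) * ∑ _j : Fin k, (4 * √(Real.log n)) ^ 2 := by
          gcongr _ * ?_
          refine Finset.sum_le_sum fun j _ => ?_
          rw [← sq_abs (ω j istar)]
          exact pow_le_pow_left₀ (abs_nonneg _) (ha j) 2
        _ = (4 * q * b) ^ 2 := by
          rw [mul_pow, mul_pow, mul_pow, hb, EuclideanSpace.norm_sq_eq, hq,
            Real.sq_sqrt (by positivity), Real.sq_sqrt (by positivity)]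
          simp
          ring
    exact abs_le_of_sq_le_sq h2 (by positivity)
  have hvS : ∑ i ∈ S, |v i| ≤ S.card := by
    calc _ ≤ ∑ i ∈ S, (1 : ℝ) := Finset.sum_le_sum fun i _ => hv1 i
      _ = _ := by simp
  have hvl1 : l1 v = ∑ i ∈ S, |v i| + σ := (Finset.sum_add_sum_compl S _).symm
  have hzv : α • v + u - v = u - t • v := by rw [hα]; module
  -- The error is controlled as soon as the Gaussian coefficient vector is of size `σ / n`.
  have main : n * b ≤ 200 * σ := by
    rcases le_total (S.card : ℝ) σ with hcase | hcase
    · have := hlow α β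
      linarith
    · have hqS : q * S.card ≤ 1 / 10 ^ 8 * n := by
        rw [le_div_iff₀ (by positivity)] at hS
        linarith
      have hS' : (S.card : ℝ) ≤ 1 / 10 ^ 8 * n := by
        have : (S.card : ℝ) * 1 ≤ S.card * q := by gcongr
        linarith
      have hu0 : n / 50 * b ≤ l1 u := by simpa using hlow 0 β
      have huS : ∑ i ∈ S, |u i| ≤ 8 / 10 ^ 4 * n * b := by
        refine (sum_abs_le_sqrt_card_mul_l2 u S).trans ?_
        have h1 : √(S.card : ℝ) ≤ 1 / 10 ^ 4 * √n := by
          rw [show (1 : ℝ) / 10 ^ 4 = √(1 / 10 ^ 8) by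
            rw [show (1 : ℝ) / 10 ^ 8 = (1 / 10 ^ 4) ^ 2 by norm_num,
              Real.sqrt_sq (by norm_num)], ← Real.sqrt_mul (by norm_num)]
          exact Real.sqrt_le_sqrt hS'
        calc _ ≤ (1 / 10 ^ 4 * √n) * (8 * √n * b) := mul_le_mul h1 (hop β) (l2_nonneg _) (by positivity)
          _ = 8 / 10 ^ 4 * (√n * √n) * b := by ring
          _ = _ := by rw [hss]
      have htv : |t| * l1 v ≤ 8 / 10 ^ 8 * n * b := by
        calc |t| * l1 v ≤ (4 * q * b) * (2 * S.card) := by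
              refine mul_le_mul htb ?_ (l1_nonneg _) (by positivity)
              linarith
          _ = 8 * b * (q * S.card) := by ring
          _ ≤ 8 * b * (1 / 10 ^ 8 * n) := by gcongr
          _ = _ := by ring
      -- Coordinatewise comparison of `‖v + u - t v‖₁` with `‖v‖₁`, on and off `S`.
      have h1 : l1 (α • v + u) ≥ ∑ i ∈ S, |v i| - ∑ i ∈ S, |u i| + (∑ i ∈ Sᶜ, |u i| - σ)
          - |t| * l1 v := by
        have e1 : ∀ i, |v i| - |u i| - |t| * |v i| ≤ |(α • v + u) i| := fun i => by
          have : v i = (α • v + u) i - u i + t * v i := by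
            simp [hα]; ring
          have h2 : |v i| ≤ |(α • v + u) i| + |u i| + |t| * |v i| := by
            calc |v i| = |(α • v + u) i - u i + t * v i| := by rw [← this]
              _ ≤ |(α • v + u) i - u i| + |t * v i| := abs_add_le _ _
              _ ≤ _ := by rw [abs_mul]; gcongr; exact abs_sub _ _
          linarith
        have e2 : ∀ i, |u i| - |v i| - |t| * |v i| ≤ |(α • v + u) i| := fun i => by
          have : u i = (α • v + u) i - v i + t * v i := by
            simp [hα]; ring
          have h2 : |u i| ≤ |(α • v + u) i| + |v i| + |t| * |v i| := by
            calc |u i| = |(α • v + u) i - v i + t * v i| := by rw [← this]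
              _ ≤ |(α • v + u) i - v i| + |t * v i| := abs_add_le _ _
              _ ≤ _ := by rw [abs_mul]; gcongr; exact abs_sub _ _
          linarith
        have s1 := Finset.sum_le_sum fun i (_ : i ∈ S) => e1 i
        have s2 := Finset.sum_le_sum fun i (_ : i ∈ Sᶜ) => e2 i
        simp only [Finset.sum_sub_distrib, ← Finset.mul_sum] at s1 s2
        have s3 : l1 (α • v + u) = ∑ i ∈ S, |(α • v + u) i| + ∑ i ∈ Sᶜ, |(α • v + u) i| :=
          (Finset.sum_add_sum_compl S _).symm
        rw [s3, hvl1, mul_add]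
        linarith
      have hul1 : l1 u = ∑ i ∈ S, |u i| + ∑ i ∈ Sᶜ, |u i| := (Finset.sum_add_sum_compl S _).symm
      have hnb : 0 ≤ n * b := by positivity
      linarith
  have hvl2 : l2 v ≤ √n := by
    refine Real.sqrt_le_sqrt ?_
    calc ∑ i, v i ^ 2 ≤ ∑ _i : Fin n, (1 : ℝ) := Finset.sum_le_sum fun i _ => by
          rw [← sq_abs]; exact pow_le_one₀ (abs_nonneg _) (hv1 i)
      _ = n := by simp
  rw [hzv]
  calc l2 (u - t • v) ≤ l2 u + |t| * l2 v := by rw [← l2_smul]; exact l2_sub_le _ _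
    _ ≤ 8 * √n * b + (4 * q * b) * √n :=
      add_le_add (hop β) (mul_le_mul htb hvl2 (l2_nonneg _) (by positivity))
    _ ≤ 8 * √n * b * q + (4 * q * b) * √n := by
      gcongr ?_ + _
      exact le_mul_of_one_le_right (by positivity) hq1
    _ = 12 * q / √n * (n * b) := by
      rw [← hss]; field_simp; norm_num
    _ ≤ 12 * q / √n * (200 * σ) := by gcongr
    _ = _ := by ring

/-! ### The exceptional event -/

lemma prob_l2_comb_gt {n k : ℕ} (x : EuclideanSpace ℝ (Fin k)) (hx : ‖x‖ = 1) :
    (Measure.pi fun _ : Fin k => stdGaussianVec n).real {ω | 4 * √n < l2 (comb ω x)}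
      ≤ (1 / 4) ^ n := by
  have hβ : ∑ j, x j ^ 2 = 1 := by rw [← EuclideanSpace.real_norm_sq_eq, hx]; norm_num
  have hm : Measurable (fun ω : Fin k → Fin n → ℝ => ∑ j, x j • ω j) := by fun_prop
  refine ENNReal.toReal_le_of_le_ofReal (by positivity) ?_
  refine (Measure.le_map_apply hm.aemeasurable {u | 4 * √n < l2 u}).trans ?_
  rw [map_comb _ hβ]
  exact l2_tail n

lemma prob_l1_shift_lt {n k : ℕ} (m : Fin n → ℝ) (x : EuclideanSpace ℝ (Fin k)) (hx : ‖x‖ = 1) :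
    (Measure.pi fun _ : Fin k => stdGaussianVec n).real {ω | l1 (m + comb ω x) < n / 20}
      ≤ (1 / 4) ^ n := by
  have hβ : ∑ j, x j ^ 2 = 1 := by rw [← EuclideanSpace.real_norm_sq_eq, hx]; norm_num
  have hm : Measurable (fun ω : Fin k → Fin n → ℝ => ∑ j, x j • ω j) := by fun_prop
  refine ENNReal.toReal_le_of_le_ofReal (by positivity) ?_
  refine (Measure.le_map_apply hm.aemeasurable {u | l1 (m + u) < n / 20}).trans ?_
  rw [map_comb _ hβ]
  exact l1_small_ball m

lemma prob_entry_gt {n k : ℕ} (hn : 2 ≤ n) (j : Fin k) (i : Fin n) :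
    (Measure.pi fun _ : Fin k => stdGaussianVec n).real {ω | 4 * √(Real.log n) < |ω j i|}
      ≤ 1 / (n : ℝ) ^ 2 := by
  refine ENNReal.toReal_le_of_le_ofReal (by positivity) ?_
  have hm : Measurable fun ω : Fin k → Fin n → ℝ => ω j := measurable_pi_apply j
  have hmap : (Measure.pi fun _ : Fin k => stdGaussianVec n).map (fun ω => ω j)
      = stdGaussianVec n := (measurePreserving_eval (fun _ : Fin k => stdGaussianVec n) j).map_eq
  refine (Measure.le_map_apply hm.aemeasurable
    {u : Fin n → ℝ | 4 * √(Real.log n) < |u i|}).trans ?_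
  rw [hmap]
  exact entry_tail hn i

/-- Outside an event of probability at most `k / n ^ 2 + 1804 · 2 ^ (-n)`, the Gaussian matrix has
operator norm at most `8 √n`, the `ℓ¹` norm is bounded below on the whole span, and the row of
index `istar` has entries of size `O(√(log n))`. -/
lemma exists_bad_event {n k : ℕ} (hn : 2 ≤ n) (hkn : (k : ℝ) ≤ (n : ℝ) / 32)
    (v : Fin n → ℝ) (hv : 0 < l1 v) (istar : Fin n) :
    ∃ B : Set (Fin k → Fin n → ℝ),
      (Measure.pi fun _ : Fin k => stdGaussianVec n).real B ≤
        k / (n : ℝ) ^ 2 + 1804 * (1 / 2) ^ n ∧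
      ∀ ω ∉ B, (∀ β, l2 (comb ω β) ≤ 8 * √n * ‖β‖) ∧
        (∀ (α : ℝ) β, n / 50 * ‖β‖ ≤ l1 (α • v + comb ω β)) ∧
        ∀ j, |ω j istar| ≤ 4 * √(Real.log n) := by
  obtain ⟨T, hT1, hTc, hT⟩ := exists_sphere_net (EuclideanSpace ℝ (Fin k))
    (show (0 : ℝ) < 1 / 400 by norm_num)
  set P := Measure.pi fun _ : Fin k => stdGaussianVec n with hP
  -- The net has at most `801 ^ k ≤ 2 ^ (32 k) ≤ 2 ^ n` points.
  have hTn : (T.card : ℝ) ≤ 2 ^ n := by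
    rw [finrank_euclideanSpace_fin] at hTc
    have h32 : 32 * k ≤ n := by
      have : (32 * k : ℝ) ≤ n := by linarith
      exact_mod_cast this
    calc (T.card : ℝ) ≤ (1 + 2 / (1 / 400)) ^ k := hTc
      _ ≤ (2 ^ 32) ^ k := by gcongr; norm_num
      _ = 2 ^ (32 * k) := by rw [pow_mul]
      _ ≤ 2 ^ n := pow_le_pow_right₀ (by norm_num) h32
  have hTp : (T.card : ℝ) * (1 / 4) ^ n ≤ (1 / 2) ^ n := by
    calc (T.card : ℝ) * (1 / 4) ^ n ≤ 2 ^ n * (1 / 4) ^ n := by gcongr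
      _ = (1 / 2) ^ n := by rw [← mul_pow]; norm_num
  let B1 : Set (Fin k → Fin n → ℝ) :=
    ⋃ j ∈ (Finset.univ : Finset (Fin k)), {ω | 4 * √(Real.log n) < |ω j istar|}
  let B2 : Set (Fin k → Fin n → ℝ) := ⋃ x ∈ T, {ω | 4 * √n < l2 (comb ω x)}
  let B3 : Set (Fin k → Fin n → ℝ) := ⋃ p ∈ T ×ˢ Finset.Icc (-901 : ℤ) 901,
    {ω | l1 (((p.2 : ℝ) / 100 * (n / l1 v)) • v + comb ω p.1) < n / 20}
  have hB1 : P.real B1 ≤ k / (n : ℝ) ^ 2 := by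
    refine (measureReal_biUnion_finset_le _ _).trans ?_
    calc _ ≤ ∑ _j : Fin k, 1 / (n : ℝ) ^ 2 :=
          Finset.sum_le_sum fun j _ => prob_entry_gt hn j istar
      _ = _ := by simp [div_eq_mul_inv]
  have hB2 : P.real B2 ≤ (1 / 2) ^ n := by
    refine (measureReal_biUnion_finset_le _ _).trans (le_trans ?_ hTp)
    calc _ ≤ ∑ _x ∈ T, (1 / 4 : ℝ) ^ n :=
          Finset.sum_le_sum fun x hx => prob_l2_comb_gt x (hT1 x hx)
      _ = _ := by simp
  have hB3 : P.real B3 ≤ 1803 * (1 / 2) ^ n := by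
    refine (measureReal_biUnion_finset_le _ _).trans ?_
    calc _ ≤ ∑ _p ∈ T ×ˢ Finset.Icc (-901 : ℤ) 901, (1 / 4 : ℝ) ^ n :=
          Finset.sum_le_sum fun p hp =>
            prob_l1_shift_lt _ p.1 (hT1 p.1 (Finset.mem_product.1 hp).1)
      _ = 1803 * (T.card * (1 / 4) ^ n) := by
          have hc : (Finset.Icc (-901 : ℤ) 901).card = 1803 := by
            rw [Int.card_Icc]
            rfl
          rw [Finset.sum_const, Finset.card_product, hc, nsmul_eq_mul]
          push_cast
          ring
      _ ≤ _ := by gcongr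
  refine ⟨B1 ∪ B2 ∪ B3, ?_, fun ω hω => ?_⟩
  · have h1 := measureReal_union_le (μ := P) (B1 ∪ B2) B3
    have h2 := measureReal_union_le (μ := P) B1 B2
    linarith
  · simp only [B1, B2, B3, Set.mem_union, Set.mem_iUnion, Set.mem_ofPred_eq, not_or, not_exists,
      not_lt, exists_prop, not_and] at hω
    obtain ⟨⟨h1, h2⟩, h3⟩ := hω
    have hop := l2_comb_le ω T hT h2
    refine ⟨hop, l1_comb_ge (by omega) ω T hT hop v hv fun x hx j hj => ?_,
      fun j => h1 j (Finset.mem_univ _)⟩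
    exact h3 (x, j) (Finset.mk_mem_product hx hj)

/-- There exist universal constants `c, C, γ₁, γ₂ > 0` such that for all
sufficiently large `n`: if `k ≤ n/32` is a positive integer, `s = ⌊c n / (√k √(log n))⌋`,
`v ∈ ℝⁿ` is nonzero with best `s`-sparse approximation `v_s`, `ṽ₁, …, ṽ_k` are i.i.d. standard
Gaussian vectors, `W = span{v, ṽ₁, …, ṽ_k}`, and `|v(i*)| = ‖v‖_∞`, then with probability at
least `1 − γ₁ e^{−γ₂ n/2} − k e^{−⌊c √(n/log n)⌋} − k/n²`, every minimizer `z#` of `‖z‖₁` over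
`{z ∈ W : z(i*) = 1}` satisfies `‖z# − v/v(i*)‖₂ ≤ C (√(k log n)/√n) ‖v − v_s‖₁ / ‖v‖_∞`. -/
theorem stable_recovery_scaling_law :
    ∃ c C γ₁ γ₂ : ℝ, 0 < c ∧ 0 < C ∧ 0 < γ₁ ∧ 0 < γ₂ ∧ ∃ N : ℕ, ∀ n : ℕ, N ≤ n →
      ∀ k : ℕ, 0 < k → (k : ℝ) ≤ (n : ℝ) / 32 →
      ∀ v : Fin n → ℝ, v ≠ 0 →
      ∀ vs : Fin n → ℝ,
        IsBestSparseApprox (⌊c * n / (Real.sqrt k * Real.sqrt (Real.log n))⌋₊) v vs →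
      ∀ istar : Fin n, (∀ i, |v i| ≤ |v istar|) →
      (Measure.pi fun _ : Fin k => stdGaussianVec n)
        {ω : Fin k → Fin n → ℝ |
          ∀ z : Fin n → ℝ, z ∈ Submodule.span ℝ (insert v (Set.range ω)) →
            z istar = 1 →
            (∀ w : Fin n → ℝ, w ∈ Submodule.span ℝ (insert v (Set.range ω)) →
              w istar = 1 → l1 z ≤ l1 w) →
            l2 (z - (v istar)⁻¹ • v) ≤
              C * (Real.sqrt ((k : ℝ) * Real.log n) / Real.sqrt n) *
                (l1 (v - vs) / |v istar|)} ≥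
      ENNReal.ofReal (1 - γ₁ * Real.exp (-γ₂ * n / 2)
        - k * Real.exp (-(⌊c * Real.sqrt ((n : ℝ) / Real.log n)⌋₊ : ℝ))
        - (k : ℝ) / (n : ℝ) ^ 2) := by
  refine ⟨1 / 10 ^ 8, 2400, 1804, 1, by norm_num, by norm_num, by norm_num, by norm_num, 3, ?_⟩
  intro n hn k hk hkn v hv vs hvs istar hmax
  have hn3 : (3 : ℝ) ≤ n := by exact_mod_cast hn
  have hlog : 1 ≤ Real.log n := by
    rw [Real.le_log_iff_exp_le (by linarith)]
    linarith [Real.exp_one_lt_d9]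
  have hvi : v istar ≠ 0 := fun h0 => hv <| funext fun i => by
    have := hmax i
    rw [h0, abs_zero] at this
    exact abs_nonpos_iff.1 this
  have hvi' : 0 < |v istar| := abs_pos.2 hvi
  obtain ⟨S, hScard, hS1, hS0, -⟩ := hvs
  set v' := (v istar)⁻¹ • v with hv'
  have hv'i : v' istar = 1 := by simp [hv', hvi]
  have hv'1 : ∀ i, |v' i| ≤ 1 := fun i => by
    rw [hv', Pi.smul_apply, smul_eq_mul, abs_mul, abs_inv, inv_mul_eq_div, div_le_one hvi']
    exact hmax i
  have hv'l1 : 0 < l1 v' := by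
    have : |v' istar| ≤ l1 v' :=
      Finset.single_le_sum (f := fun i => |v' i|) (fun _ _ => abs_nonneg _) (Finset.mem_univ istar)
    rw [hv'i, abs_one] at this
    linarith
  have hσ : ∑ i ∈ Sᶜ, |v' i| = l1 (v - vs) / |v istar| := by
    have h1 : l1 (v - vs) = ∑ i ∈ Sᶜ, |v i| := by
      rw [l1, ← Finset.sum_add_sum_compl S]
      have e1 : ∑ i ∈ S, |(v - vs) i| = 0 := Finset.sum_eq_zero fun i hi => by simp [hS1 i hi]
      have e2 : ∑ i ∈ Sᶜ, |(v - vs) i| = ∑ i ∈ Sᶜ, |v i| :=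
        Finset.sum_congr rfl fun i hi => by simp [hS0 i (Finset.mem_compl.1 hi)]
      rw [e1, e2, zero_add]
    rw [h1, Finset.sum_div]
    refine Finset.sum_congr rfl fun i _ => ?_
    rw [hv', Pi.smul_apply, smul_eq_mul, abs_mul, abs_inv, inv_mul_eq_div]
  have hScard' : (S.card : ℝ) ≤ 1 / 10 ^ 8 * n / (√k * √(Real.log n)) := by
    rw [hScard]
    exact Nat.floor_le (by positivity)
  obtain ⟨B, hB, hgood⟩ := exists_bad_event (by omega) hkn v' hv'l1 istar
  set P := Measure.pi fun _ : Fin k => stdGaussianVec n with hP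
  set A := {ω : Fin k → Fin n → ℝ |
          ∀ z : Fin n → ℝ, z ∈ Submodule.span ℝ (insert v (Set.range ω)) →
            z istar = 1 →
            (∀ w : Fin n → ℝ, w ∈ Submodule.span ℝ (insert v (Set.range ω)) →
              w istar = 1 → l1 z ≤ l1 w) →
            l2 (z - v') ≤ 2400 * (√((k : ℝ) * Real.log n) / √n) * (l1 (v - vs) / |v istar|)} with hA
  have hAB : (Set.univ : Set (Fin k → Fin n → ℝ)) ⊆ A ∪ B := by
    intro ω _
    by_cases hωB : ω ∈ B
    · exact Or.inr hωB
    refine Or.inl ?_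
    obtain ⟨hop, hlow, hentry⟩ := hgood ω hωB
    intro z hz hzi hzmin
    obtain ⟨a, y, hy, rfl⟩ := Submodule.mem_span_insert.1 hz
    obtain ⟨b, rfl⟩ := (Submodule.mem_span_range_iff_exists_fun ℝ).1 hy
    have hmin := hzmin v'
      (Submodule.smul_mem _ _ (Submodule.subset_span (Set.mem_insert _ _))) hv'i
    have hzv : a • v + ∑ j, b j • ω j = (a * v istar) • v' + comb ω (WithLp.toLp 2 b) := by
      simp [hv', smul_smul, hvi, comb]
    rw [hzv] at hzi hmin ⊢
    rw [← hσ]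
    exact recovery_of_good hlog hk ω v' istar hv'i hv'1 hop hlow hentry S hScard' _ _ hzi hmin
  have h1 : 1 ≤ P.real A + P.real B := by
    calc (1 : ℝ) = P.real Set.univ := by simp
      _ ≤ P.real (A ∪ B) := measureReal_mono hAB
      _ ≤ _ := measureReal_union_le _ _
  have hexp : (1 / 2 : ℝ) ^ n ≤ Real.exp (-1 * n / 2) := by
    have : -1 * (n : ℝ) / 2 = n * (-1 / 2) := by ring
    rw [this, Real.exp_nat_mul]
    refine pow_le_pow_left₀ (by norm_num) ?_ n
    linarith [Real.add_one_le_exp (-1 / 2 : ℝ)]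
  have hpos : 0 ≤ k * Real.exp (-(⌊1 / 10 ^ 8 * √((n : ℝ) / Real.log n)⌋₊ : ℝ)) := by positivity
  change ENNReal.ofReal _ ≤ P A
  rw [← ofReal_measureReal]
  refine ENNReal.ofReal_le_ofReal ?_
  linarith
end

section
/- There exist universal constants c > 0, C > 0, γ₁ > 0, γ₂ > 0 such that for all sufficiently large n the following holds. Let k be a positive integer with k ≤ n/32, let s be any positive integer with s ≤ c·n/(√k·√(log n)), let v ∈ ℝⁿ be a nonzero vector, let v_s be a best s-sparse approximation of v, let ṽ₁, …, ṽ_k be independent standard Gaussian random vectors in ℝⁿ, let W = span{v, ṽ₁, …, ṽ_k}, and fix an index i* with |v(i*)| = ‖v‖_∞. Then with probability at least 1 − γ₁·e^{−γ₂·n} − k·e^{−s} − k/n², every minimizer z# of ‖z‖₁ over the set {z ∈ W : z(i*) = 1} satisfies ‖z# − v/v(i*)‖₂ ≤ C·(√n/s)·‖v − v_s‖₁/‖v‖_∞. -/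
/-!
Write `u = v / v(i*)`, so that `‖u‖_∞ = 1`, and let `S` be the support of the best `s`-sparse
approximation. Every `z ∈ W` with `z(i*) = 1` has the form `z = u + h` with
`h = g - g(i*) u` and `g = ∑ⱼ aⱼ ṽⱼ`, and a minimizer satisfies `‖u + h‖₁ ≤ ‖u‖₁`. If `h` carries
at most a third of its `ℓ¹` mass on `S` (a null space property), this forces
`‖h_{Sᶜ}‖₁ ≤ 4 ‖u_{Sᶜ}‖₁`, and `‖u_{Sᶜ}‖₁ = ‖v - v_s‖₁ / ‖v‖_∞`.

With `q = √k √(log n)`, four events are used: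
* `|ṽⱼ(i*)|² < 16 log n` for all `j` (failure at most `k / n²`), so that `|g(i*)| ≤ 4 q ‖a‖₂`;
* `∑_{i ∈ S} ṽⱼ(i)² < 9 s` for all `j` (failure at most `k e^{-s}`), so that
  `‖g_S‖₁ ≤ 3 s √k ‖a‖₂`;
* `‖g‖₂ ≤ 6 √n ‖a‖₂` for all `a`;
* `‖(g - t u)_{Sᶜ}‖₁ ≥ n ‖a‖₂ / 128` for all `a` and all real `t` with `|t| ≤ n ‖a‖₂`.

The first two and `s q ≤ n / 2048` give `‖h_S‖₁ ≤ n ‖a‖₂ / 256`, which together with the last one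
is the null space property, and also `n ‖a‖₂ ≤ 512 ‖u_{Sᶜ}‖₁`. Finally `‖h‖₂ ≤ ‖g‖₂ + |g(i*)| √n`
is of order `(n / s) √n ‖a‖₂`, and the claim follows (`error_bound`).

The last two events hold up to exponentially small probability by a union bound over nets. For a
unit vector `a`, `g` is a standard Gaussian vector (`map_combination`), so each single event is
governed by Chernoff's bound: a chi-square upper tail (`chi_sq_tail`), and a small ball estimate
`P(‖(g - y)_{Sᶜ}‖₁ ≤ n / 64) ≤ eⁿ 64^{-|Sᶜ|}` uniform in the centre `y` (`small_ball`). As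
`k ≤ n / 32`, these beat the cardinality of the nets (`exists_net`) and of the grid for `t`.
-/

open MeasureTheory ProbabilityTheory Real

/-! ### Chernoff bounds for Gaussian vectors -/

instance isProbabilityMeasure_stdGaussianVec (n : ℕ) : IsProbabilityMeasure (stdGaussianVec n) := by
  unfold stdGaussianVec; infer_instance

/-- Chernoff's bound for a sum of functions of independent standard Gaussian coordinates. -/
lemma chernoff {n : ℕ} (S : Finset (Fin n)) (f : Fin n → ℝ → ℝ) (hf : ∀ i, Measurable (f i))
    (b : ℝ) (hb0 : 0 ≤ b)
    (hb : ∀ i, ∫⁻ x, ENNReal.ofReal (exp (f i x)) ∂(gaussianReal 0 1) ≤ ENNReal.ofReal b)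
    (t : ℝ) :
    stdGaussianVec n {x | t ≤ ∑ i ∈ S, f i (x i)} ≤ ENNReal.ofReal (exp (-t) * b ^ S.card) := by
  have hind : iIndepFun (fun (i : Fin n) (x : Fin n → ℝ) => ENNReal.ofReal (exp (f i (x i))))
      (stdGaussianVec n) := by
    unfold stdGaussianVec
    exact iIndepFun_pi (μ := fun _ : Fin n => gaussianReal 0 1)
      (X := fun i x => ENNReal.ofReal (exp (f i x)))
      (fun i => by have := hf i; fun_prop)
  have hm : ∀ i, Measurable fun (x : Fin n → ℝ) => ENNReal.ofReal (exp (f i (x i))) := fun i => by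
    have := hf i; fun_prop
  have hI : ∫⁻ x, ∏ i ∈ S, ENNReal.ofReal (exp (f i (x i))) ∂(stdGaussianVec n)
      ≤ ENNReal.ofReal b ^ S.card := by
    rw [lintegral_prod_eq_prod_lintegral_of_indepFun S _ hind hm, ← Finset.prod_const]
    refine Finset.prod_le_prod' fun i _ => ?_
    have hmp := (measurePreserving_eval (fun _ : Fin n => gaussianReal 0 1) i).lintegral_comp
      (f := fun x => ENNReal.ofReal (exp (f i x))) (by have := hf i; fun_prop)
    unfold stdGaussianVec
    simp only [Function.eval] at hmp
    rw [hmp]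
    exact hb i
  have hmk := mul_meas_ge_le_lintegral (μ := stdGaussianVec n)
    (S.measurable_fun_prod fun i _ => hm i) (ENNReal.ofReal (exp t))
  have hset : {x : Fin n → ℝ | t ≤ ∑ i ∈ S, f i (x i)} =
      {x | ENNReal.ofReal (exp t) ≤ ∏ i ∈ S, ENNReal.ofReal (exp (f i (x i)))} := by
    ext x
    simp only [Set.mem_ofPred_eq]
    rw [← ENNReal.ofReal_prod_of_nonneg (fun i _ => (exp_pos _).le), ← exp_sum,
      ENNReal.ofReal_le_ofReal_iff (exp_pos _).le, exp_le_exp]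
  rw [hset]
  have h5 : ENNReal.ofReal (exp (-t) * b ^ S.card)
      = ENNReal.ofReal (exp (-t)) * ENNReal.ofReal b ^ S.card := by
    rw [ENNReal.ofReal_mul (exp_pos _).le]
    rw [ENNReal.ofReal_pow hb0]
  rw [h5]
  have h6 : ENNReal.ofReal (exp (-t)) * ENNReal.ofReal (exp t) = 1 := by
    rw [← ENNReal.ofReal_mul (exp_pos _).le, ← exp_add]; simp
  calc _ = ENNReal.ofReal (exp (-t)) * (ENNReal.ofReal (exp t) * _) := by
        rw [← mul_assoc, h6, one_mul]
    _ ≤ ENNReal.ofReal (exp (-t)) * ENNReal.ofReal b ^ S.card := by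
        gcongr
        exact hmk.trans hI

lemma lintegral_gaussian_eq (f : ℝ → ℝ) (hf : Measurable f) :
    ∫⁻ x, ENNReal.ofReal (exp (f x)) ∂(gaussianReal 0 1)
      = ∫⁻ x, ENNReal.ofReal ((√(2 * π))⁻¹ * exp (f x - x ^ 2 / 2)) := by
  rw [gaussianReal_of_var_ne_zero 0 one_ne_zero,
    lintegral_withDensity_eq_lintegral_mul _ (measurable_gaussianPDF 0 1) (by fun_prop)]
  refine lintegral_congr fun x => ?_
  simp only [Pi.mul_apply, gaussianPDF, gaussianPDFReal]
  rw [← ENNReal.ofReal_mul (by positivity)]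
  congr 1
  rw [mul_assoc, ← exp_add]
  simp only [NNReal.coe_one, mul_one, sub_zero]
  congr 2
  ring

/-- The exact value is `√2`. -/
lemma lintegral_exp_sq :
    ∫⁻ x, ENNReal.ofReal (exp (x ^ 2 / 4)) ∂(gaussianReal 0 1) ≤ ENNReal.ofReal (3 / 2) := by
  rw [lintegral_gaussian_eq (fun x => x ^ 2 / 4) (by fun_prop)]
  have h1 : ∀ x : ℝ, (√(2 * π))⁻¹ * exp (x ^ 2 / 4 - x ^ 2 / 2)
      = (√(2 * π))⁻¹ * exp (-(1 / 4) * x ^ 2) := fun x => by congr 2; ring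
  simp_rw [h1]
  rw [← ofReal_integral_eq_lintegral_ofReal
    ((integrable_exp_neg_mul_sq (by norm_num)).const_mul _)
    (Filter.Eventually.of_forall fun x => by positivity), integral_const_mul, integral_gaussian]
  refine ENNReal.ofReal_le_ofReal ?_
  rw [inv_mul_le_iff₀ (by positivity)]
  refine Real.sqrt_le_iff.2 ⟨by positivity, ?_⟩
  rw [mul_pow, Real.sq_sqrt (by positivity)]
  have := Real.pi_pos
  nlinarith

/-- The Gaussian density is at most `1 / 2`, so the Laplace transform of `|g - y|` at `64` is at
most that of the measure `dx / 2`, whatever the centre `y`. -/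
lemma lintegral_exp_abs (y : ℝ) :
    ∫⁻ x, ENNReal.ofReal (exp (-(64 * |x - y|))) ∂(gaussianReal 0 1)
      ≤ ENNReal.ofReal (1 / 64) := by
  rw [lintegral_gaussian_eq (fun x => -(64 * |x - y|)) (by fun_prop)]
  have hpi : (√(2 * π))⁻¹ ≤ 1 / 2 := by
    rw [inv_le_comm₀ (by positivity) (by norm_num)]
    refine Real.le_sqrt_of_sq_le ?_
    have := Real.pi_gt_three
    norm_num; linarith
  have h1 : ∀ x : ℝ, ENNReal.ofReal ((√(2 * π))⁻¹ * exp (-(64 * |x - y|) - x ^ 2 / 2))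
      ≤ ENNReal.ofReal (1 / 2 * exp (-(64 * |x - y|))) := fun x => by
    refine ENNReal.ofReal_le_ofReal ?_
    gcongr
    nlinarith [sq_nonneg x]
  refine (lintegral_mono h1).trans ?_
  rw [lintegral_sub_right_eq_self (fun x => ENNReal.ofReal (1 / 2 * exp (-(64 * |x|)))) y]
  have hval : ∫ x : ℝ, exp (-(64 * |x|)) = 1 / 32 := by
    rw [integral_comp_abs (f := fun x : ℝ => exp (-(64 * x)))]
    have := integral_exp_mul_Ioi (a := (-64 : ℝ)) (by norm_num) 0
    simp only [neg_mul, mul_zero, exp_zero] at this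
    rw [this]
    norm_num
  have hI : Integrable (fun x : ℝ => exp (-(64 * |x|))) :=
    Integrable.of_integral_ne_zero (by rw [hval]; norm_num)
  rw [← ofReal_integral_eq_lintegral_ofReal (hI.const_mul _)
    (Filter.Eventually.of_forall fun x => by positivity), integral_const_mul, hval]
  norm_num

/-- Upper tail of `∑_{i ∈ S} gᵢ²`. -/
lemma chi_sq_tail {n : ℕ} (S : Finset (Fin n)) (t : ℝ) :
    stdGaussianVec n {x | t ≤ ∑ i ∈ S, x i ^ 2}
      ≤ ENNReal.ofReal (exp (-(t / 4)) * (3 / 2) ^ S.card) := by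
  have h := chernoff S (fun _ x => x ^ 2 / 4) (fun _ => by fun_prop) (3 / 2) (by norm_num)
    (fun _ => lintegral_exp_sq) (t / 4)
  refine le_trans (measure_mono fun x hx => ?_) h
  simp only [Set.mem_ofPred_eq] at hx ⊢
  rw [← Finset.sum_div]
  linarith

/-- Small ball estimate in `ℓ¹`, uniform in the centre `y`. -/
lemma small_ball {n : ℕ} (S : Finset (Fin n)) (y : Fin n → ℝ) :
    stdGaussianVec n {x | ∑ i ∈ S, |x i - y i| ≤ n / 64}
      ≤ ENNReal.ofReal (exp n * (1 / 64) ^ S.card) := by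
  have h := chernoff S (fun i x => -(64 * |x - y i|)) (fun _ => by fun_prop) (1 / 64)
    (by norm_num) (fun i => lintegral_exp_abs (y i)) (-n)
  rw [neg_neg] at h
  refine le_trans (measure_mono fun x hx => ?_) h
  simp only [Set.mem_ofPred_eq] at hx ⊢
  rw [Finset.sum_neg_distrib, ← Finset.mul_sum]
  linarith

/-! ### Combinations of Gaussian vectors and nets -/

/-- Rotation invariance: a unit combination of independent standard Gaussian vectors is again a
standard Gaussian vector. -/
lemma map_combination {n k : ℕ} (a : EuclideanSpace ℝ (Fin k)) (ha : ‖a‖ = 1) :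
    (Measure.pi fun _ : Fin k => stdGaussianVec n).map
      (fun ω : Fin k → Fin n → ℝ => fun i => ∑ j, a j * ω j i) = stdGaussianVec n := by
  have hT : Measurable (fun ω : Fin k → Fin n → ℝ => fun i => ∑ j, a j * ω j i) := by fun_prop
  have := Measure.isProbabilityMeasure_map (μ := Measure.pi fun _ : Fin k => stdGaussianVec n)
    hT.aemeasurable
  refine (charFun_eq_pi_iff (μ := fun _ : Fin n => gaussianReal 0 1)).1 fun t => ?_
  rw [charFun_apply, integral_map (by fun_prop) (by fun_prop), integral_map hT.aemeasurable
    (by fun_prop)]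
  have h1 : ∀ ω : Fin k → Fin n → ℝ,
      Complex.exp ((inner ℝ (WithLp.toLp 2 fun i => ∑ j, a j * ω j i) t : ℝ) * Complex.I)
        = ∏ j, ∏ i, Complex.exp (((a j * t i : ℝ) : ℂ) * (ω j i : ℂ) * Complex.I) := fun ω => by
    simp_rw [← Complex.exp_sum]
    congr 1
    simp only [PiLp.inner_apply, RCLike.inner_apply, conj_trivial]
    push_cast
    simp_rw [Finset.mul_sum, Finset.sum_mul]
    rw [Finset.sum_comm]
    refine Finset.sum_congr rfl fun j _ => Finset.sum_congr rfl fun i _ => by ring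
  simp_rw [h1]
  rw [integral_fintype_prod_eq_prod (μ := fun _ : Fin k => stdGaussianVec n)
    (fun j (x : Fin n → ℝ) => ∏ i, Complex.exp (((a j * t i : ℝ) : ℂ) * (x i : ℂ) * Complex.I))]
  unfold stdGaussianVec
  have h2 : ∀ j, ∫ x : Fin n → ℝ, ∏ i,
      Complex.exp (((a j * t i : ℝ) : ℂ) * (x i : ℂ) * Complex.I)
        ∂(Measure.pi fun _ : Fin n => gaussianReal 0 1)
      = ∏ i, charFun (gaussianReal 0 1) (a j * t i) := fun j => by
    rw [integral_fintype_prod_eq_prod (μ := fun _ : Fin n => gaussianReal 0 1)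
      (fun i (x : ℝ) => Complex.exp (((a j * t i : ℝ) : ℂ) * (x : ℂ) * Complex.I))]
    simp_rw [charFun_apply_real]
  simp_rw [h2]
  rw [Finset.prod_comm]
  refine Finset.prod_congr rfl fun i _ => ?_
  simp_rw [charFun_gaussianReal]
  rw [← Complex.exp_sum]
  congr 1
  have hn : ∑ j, a j ^ 2 = 1 := by rw [← EuclideanSpace.real_norm_sq_eq, ha]; norm_num
  have hn' : ∑ j, (a j : ℂ) ^ 2 = 1 := by exact_mod_cast hn
  push_cast
  simp only [mul_zero, zero_mul, zero_sub, one_mul]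
  rw [Finset.sum_neg_distrib, ← Finset.sum_div]
  simp_rw [mul_pow]
  rw [← Finset.sum_mul, hn', one_mul]

lemma measure_combination {n k : ℕ} (a : EuclideanSpace ℝ (Fin k)) (ha : ‖a‖ = 1)
    {A : Set (Fin n → ℝ)} (hA : MeasurableSet A) :
    (Measure.pi fun _ : Fin k => stdGaussianVec n) {ω | (fun i => ∑ j, a j * ω j i) ∈ A}
      = stdGaussianVec n A := by
  conv_rhs => rw [← map_combination (n := n) a ha]
  rw [Measure.map_apply (by fun_prop) hA]
  rfl

/-- The unit sphere of `ℝᵏ` has an `ε`-net with at most `(1 + 2 / ε)ᵏ` points, by comparing the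
volumes of the disjoint balls of radius `ε / 2` about a maximal `ε`-separated subset. -/
lemma exists_net (k : ℕ) (ε : ℝ) (hε : 0 < ε) :
    ∃ T : Finset (EuclideanSpace ℝ (Fin k)), (∀ a ∈ T, ‖a‖ = 1) ∧
      (∀ a, ‖a‖ = 1 → ∃ b ∈ T, ‖a - b‖ ≤ ε) ∧ (T.card : ℝ) ≤ (1 + 2 / ε) ^ k := by
  classical
  set P : Finset (EuclideanSpace ℝ (Fin k)) → Prop := fun T =>
    (∀ a ∈ T, ‖a‖ = 1) ∧ ∀ a ∈ T, ∀ b ∈ T, a ≠ b → ε ≤ ‖a - b‖ with hP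
  have hcard : ∀ T, P T → (T.card : ℝ) ≤ (1 + 2 / ε) ^ k := by
    rintro T ⟨h1, h2⟩
    let μ : Measure (EuclideanSpace ℝ (Fin k)) := volume
    have D : Set.Pairwise (T : Set (EuclideanSpace ℝ (Fin k)))
        (Function.onFun Disjoint fun c => Metric.ball c (ε / 2)) := by
      intro c hc d hd hcd
      refine Metric.ball_disjoint_ball ?_
      rw [dist_eq_norm]
      have := h2 c hc d hd hcd
      linarith
    have hsub : (⋃ c ∈ T, Metric.ball c (ε / 2)) ⊆ Metric.ball 0 (1 + ε / 2) := by
      refine Set.iUnion₂_subset fun x hx => Metric.ball_subset_ball' ?_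
      rw [dist_zero_right, h1 x hx]
      linarith
    have I : (T.card : ENNReal) * ENNReal.ofReal ((ε / 2) ^ k) * μ (Metric.ball 0 1) ≤
        ENNReal.ofReal ((1 + ε / 2) ^ k) * μ (Metric.ball 0 1) := by
      calc _ = μ (⋃ c ∈ T, Metric.ball c (ε / 2)) := by
            rw [measure_biUnion_finset D fun c _ => measurableSet_ball]
            have h3 : 0 < ε / 2 := by positivity
            simp only [μ, Measure.addHaar_ball_of_pos _ _ h3, finrank_euclideanSpace_fin]
            simp only [Finset.sum_const, nsmul_eq_mul, mul_assoc]
        _ ≤ μ (Metric.ball 0 (1 + ε / 2)) := measure_mono hsub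
        _ = _ := by
            simp only [μ, Measure.addHaar_ball_of_pos _ _ (show 0 < 1 + ε / 2 by positivity),
              finrank_euclideanSpace_fin]
    have J := (ENNReal.mul_le_mul_iff_left (Metric.measure_ball_pos _ _ zero_lt_one).ne'
      measure_ball_lt_top.ne).1 I
    have K := ENNReal.toReal_le_of_le_ofReal (by positivity) J
    rw [ENNReal.toReal_mul, ENNReal.toReal_natCast, ENNReal.toReal_ofReal (by positivity)] at K
    rw [show 1 + 2 / ε = (1 + ε / 2) / (ε / 2) by field_simp; ring, div_pow,
      le_div_iff₀ (by positivity)]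
    exact K
  have hne : ∃ m, ∃ T, P T ∧ T.card = m := ⟨0, ∅, by simp [hP], rfl⟩
  have hbdd : BddAbove {m | ∃ T, P T ∧ T.card = m} := by
    refine ⟨⌊(1 + 2 / ε) ^ k⌋₊, ?_⟩
    rintro m ⟨T, hT, rfl⟩
    exact Nat.le_floor (hcard T hT)
  obtain ⟨T, hT, hTm⟩ := Nat.sSup_mem hne hbdd
  refine ⟨T, hT.1, fun a ha => ?_, hcard T hT⟩
  by_contra! hfar
  have haT : a ∉ T := fun h => by have := hfar a h; simp at this; linarith
  have hP' : P (insert a T) := by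
    refine ⟨fun b hb => ?_, fun b hb c hc hbc => ?_⟩
    · rcases Finset.mem_insert.1 hb with rfl | hb
      · exact ha
      · exact hT.1 b hb
    · rcases Finset.mem_insert.1 hb with hb' | hb' <;>
        rcases Finset.mem_insert.1 hc with hc' | hc'
      · exact absurd (hb'.trans hc'.symm) hbc
      · rw [hb']; exact (hfar c hc').le
      · rw [hc', norm_sub_rev]; exact (hfar b hb').le
      · exact hT.2 b hb' c hc' hbc
  have : (insert a T).card ≤ sSup fun m => ∃ T, P T ∧ T.card = m :=
    le_csSup hbdd ⟨insert a T, hP', rfl⟩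
  rw [← hTm, Finset.card_insert_of_notMem haT] at this
  omega

/-! ### Deterministic estimates -/

/-- A `1 / 2`-net of the sphere determines the operator norm up to a factor `2`. -/
lemma op_bound {n k : ℕ} (ω : Fin k → Fin n → ℝ) (T : Finset (EuclideanSpace ℝ (Fin k)))
    (hT : ∀ a, ‖a‖ = 1 → ∃ b ∈ T, ‖a - b‖ ≤ 1 / 2)
    (h : ∀ b ∈ T, ∑ i, (∑ j, b j * ω j i) ^ 2 ≤ 9 * n) (a : EuclideanSpace ℝ (Fin k)) :
    ∑ i, (∑ j, a j * ω j i) ^ 2 ≤ 36 * n * ‖a‖ ^ 2 := by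
  let f : EuclideanSpace ℝ (Fin k) →L[ℝ] EuclideanSpace ℝ (Fin n) :=
    LinearMap.toContinuousLinearMap
      { toFun := fun a => WithLp.toLp 2 fun i => ∑ j, a j * ω j i
        map_add' := fun a b => by
          ext i; simp [add_mul, Finset.sum_add_distrib]
        map_smul' := fun c a => by
          ext i; simp [mul_assoc, Finset.mul_sum] }
  have hf : ∀ a, ‖f a‖ ^ 2 = ∑ i, (∑ j, a j * ω j i) ^ 2 := fun a => by
    rw [EuclideanSpace.real_norm_sq_eq]; rfl
  have hnet : ∀ b ∈ T, ‖f b‖ ≤ 3 * √n := fun b hb => by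
    refine abs_le_of_sq_le_sq' ?_ (by positivity) |>.2
    rw [hf, mul_pow, Real.sq_sqrt (by positivity)]
    linarith [h b hb]
  have hop : ‖f‖ ≤ 3 * √n + ‖f‖ * (1 / 2) := by
    refine ContinuousLinearMap.opNorm_le_of_unit_norm (by positivity) fun a ha => ?_
    obtain ⟨b, hb, hab⟩ := hT a ha
    calc ‖f a‖ = ‖f b + f (a - b)‖ := by rw [map_sub]; congr 1; abel
      _ ≤ ‖f b‖ + ‖f (a - b)‖ := norm_add_le _ _
      _ ≤ 3 * √n + ‖f‖ * (1 / 2) := by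
          gcongr
          · exact hnet b hb
          · exact (f.le_opNorm _).trans (by gcongr)
  have hle : ‖f a‖ ≤ 6 * √n * ‖a‖ := (f.le_opNorm a).trans (by gcongr; linarith)
  rw [← hf]
  calc ‖f a‖ ^ 2 ≤ (6 * √n * ‖a‖) ^ 2 := by gcongr
    _ = 36 * n * ‖a‖ ^ 2 := by
      rw [mul_pow, mul_pow, Real.sq_sqrt (by positivity)]; norm_num

/-- The `ℓ¹` lower bound passes from a net in `a` and a grid of step `1 / 256` in `t` to every unit
vector `a` and every `t` in the range of the grid. -/
lemma l1_lower {n k : ℕ} (ω : Fin k → Fin n → ℝ) (S : Finset (Fin n)) (u : Fin n → ℝ)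
    (hu : ∀ i, |u i| ≤ 1) (T : Finset (EuclideanSpace ℝ (Fin k)))
    (hT : ∀ a, ‖a‖ = 1 → ∃ b ∈ T, ‖a - b‖ ≤ 1 / 1536)
    (hop : ∀ a : EuclideanSpace ℝ (Fin k), ∑ i, (∑ j, a j * ω j i) ^ 2 ≤ 36 * n * ‖a‖ ^ 2)
    (h : ∀ b ∈ T, ∀ m ∈ Finset.Icc (-(256 * n : ℤ)) (256 * n),
      (n : ℝ) / 64 ≤ ∑ i ∈ S, |(∑ j, b j * ω j i) - (m : ℝ) / 256 * u i|)
    (a : EuclideanSpace ℝ (Fin k)) (ha : ‖a‖ = 1) (t : ℝ) (ht : |t| ≤ n) :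
    (n : ℝ) / 128 ≤ ∑ i ∈ S, |(∑ j, a j * ω j i) - t * u i| := by
  -- Of the margin `n / 64`, the net costs `n / 256` since `6 / 1536 = 1 / 256`, and the grid costs
  -- `n / 512`.
  obtain ⟨b, hb, hab⟩ := hT a ha
  set m : ℤ := round (256 * t) with hm
  have hround : |256 * t - m| ≤ 1 / 2 := abs_sub_round _
  have hmI : m ∈ Finset.Icc (-(256 * n : ℤ)) (256 * n) := by
    rw [abs_le] at ht
    rw [Finset.mem_Icc]
    rw [abs_le] at hround
    constructor
    · have : ((-(256 * n : ℤ) : ℤ) : ℝ) < (m : ℝ) + 1 := by push_cast; linarith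
      have : -(256 * n : ℤ) < m + 1 := by exact_mod_cast this
      omega
    · have : (m : ℝ) < ((256 * n : ℤ) : ℝ) + 1 := by push_cast; linarith
      have : m < (256 * n : ℤ) + 1 := by exact_mod_cast this
      omega
  have h0 := h b hb m hmI
  have hsq := hop (a - b)
  have hl1 : ∑ i, |∑ j, (a - b) j * ω j i| ≤ n / 256 := by
    have hcs := sq_sum_le_card_mul_sum_sq (s := Finset.univ)
      (f := fun i => |∑ j, (a - b) j * ω j i|)
    simp only [sq_abs, Finset.card_univ, Fintype.card_fin] at hcs
    refine abs_le_of_sq_le_sq' ?_ (by positivity) |>.2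
    refine hcs.trans ((mul_le_mul_of_nonneg_left hsq (by positivity)).trans ?_)
    have : ‖a - b‖ ^ 2 ≤ (1 / 1536) ^ 2 := by gcongr
    nlinarith [sq_nonneg (n : ℝ)]
  have hS : ∑ i ∈ S, |∑ j, (a - b) j * ω j i| ≤ n / 256 :=
    (Finset.sum_le_univ_sum_of_nonneg fun i => abs_nonneg _).trans hl1
  have hcardS : (S.card : ℝ) ≤ n := by
    exact_mod_cast (Finset.card_le_univ S).trans_eq (Fintype.card_fin n)
  have hgrid : ∑ i ∈ S, |(t - m / 256) * u i| ≤ n / 512 := by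
    have h1 : ∀ i ∈ S, |(t - m / 256) * u i| ≤ 1 / 512 := fun i _ => by
      rw [abs_mul]
      have h2 : |t - m / 256| ≤ 1 / 512 := by
        rw [abs_le] at hround ⊢
        constructor <;> linarith
      calc |t - m / 256| * |u i| ≤ 1 / 512 * 1 :=
            mul_le_mul h2 (hu i) (abs_nonneg _) (by norm_num)
        _ = 1 / 512 := by norm_num
    refine (Finset.sum_le_card_nsmul _ _ _ h1).trans ?_
    rw [nsmul_eq_mul]
    linarith
  have htri : ∑ i ∈ S, |(∑ j, b j * ω j i) - (m : ℝ) / 256 * u i| ≤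
      ∑ i ∈ S, |(∑ j, a j * ω j i) - t * u i| + ∑ i ∈ S, |∑ j, (a - b) j * ω j i|
        + ∑ i ∈ S, |(t - m / 256) * u i| := by
    rw [← Finset.sum_add_distrib, ← Finset.sum_add_distrib]
    refine Finset.sum_le_sum fun i _ => ?_
    have h3 : (∑ j, b j * ω j i) - (m : ℝ) / 256 * u i
        = ((∑ j, a j * ω j i) - t * u i) - (∑ j, (a - b) j * ω j i) + (t - m / 256) * u i := by
      have : ∑ j, (a - b) j * ω j i = ∑ j, a j * ω j i - ∑ j, b j * ω j i := by
        rw [← Finset.sum_sub_distrib]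
        exact Finset.sum_congr rfl fun j _ => by simp [sub_mul]
      rw [this]; ring
    rw [h3]
    exact (abs_add_le _ _).trans (add_le_add (abs_sub _ _) le_rfl)
  have : (0 : ℝ) ≤ n := by positivity
  linarith

lemma sq_combination_le {k : ℕ} (a : EuclideanSpace ℝ (Fin k)) (x : Fin k → ℝ) (M : ℝ)
    (hx : ∀ j, x j ^ 2 ≤ M) : (∑ j, a j * x j) ^ 2 ≤ ‖a‖ ^ 2 * (k * M) := by
  refine (Finset.sum_mul_sq_le_sq_mul_sq _ _ _).trans ?_
  rw [EuclideanSpace.real_norm_sq_eq]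
  refine mul_le_mul_of_nonneg_left ?_ (Finset.sum_nonneg fun j _ => sq_nonneg _)
  refine (Finset.sum_le_card_nsmul _ _ _ fun j _ => hx j).trans ?_
  simp

/-- If `u + h` is no longer than `u` in `ℓ¹` and `h` carries at most a third of its `ℓ¹` mass on
`S`, then `h` off `S` is controlled by `u` off `S`. -/
lemma null_space_property {n : ℕ} (S : Finset (Fin n)) (u h : Fin n → ℝ)
    (hmin : ∑ i, |u i + h i| ≤ ∑ i, |u i|)
    (hS : ∑ i ∈ S, |h i| ≤ (∑ i ∈ Sᶜ, |h i|) / 2) :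
    ∑ i ∈ Sᶜ, |h i| ≤ 4 * ∑ i ∈ Sᶜ, |u i| := by
  rw [← Finset.sum_add_sum_compl S, ← Finset.sum_add_sum_compl S (fun i => |u i|)] at hmin
  have h1 : ∑ i ∈ S, |u i| - ∑ i ∈ S, |h i| ≤ ∑ i ∈ S, |u i + h i| := by
    rw [← Finset.sum_sub_distrib]
    refine Finset.sum_le_sum fun i _ => ?_
    have := abs_sub_abs_le_abs_sub (u i) (-h i)
    rwa [abs_neg, sub_neg_eq_add] at this
  have h2 : ∑ i ∈ Sᶜ, |h i| - ∑ i ∈ Sᶜ, |u i| ≤ ∑ i ∈ Sᶜ, |u i + h i| := by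
    rw [← Finset.sum_sub_distrib]
    refine Finset.sum_le_sum fun i _ => ?_
    have := abs_sub_abs_le_abs_sub (h i) (-u i)
    rwa [abs_neg, sub_neg_eq_add, add_comm] at this
  linarith

/-- The estimate for a single error vector `h = ∑ⱼ aⱼ ωⱼ - t u`, `t = ∑ⱼ aⱼ ωⱼ(i*)`, where
`q = √k √(log n)`. -/
lemma error_bound {n k s : ℕ} (hs : 0 < s) (q : ℝ) (hq0 : 0 ≤ q)
    (hkq : (k : ℝ) ≤ q ^ 2) (hqn : 4 * q ≤ n) (hsq : s * q ≤ n / 2048) (hsn : s ≤ n)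
    (ω : Fin k → Fin n → ℝ) (S : Finset (Fin n)) (hS : S.card = s) (u : Fin n → ℝ)
    (hu : ∀ i, |u i| ≤ 1) (istar : Fin n)
    (h1 : ∀ j, k * ω j istar ^ 2 ≤ 16 * q ^ 2)
    (h2 : ∀ j, ∑ i ∈ S, ω j i ^ 2 ≤ 9 * s)
    (h3 : ∀ a : EuclideanSpace ℝ (Fin k), ∑ i, (∑ j, a j * ω j i) ^ 2 ≤ 36 * n * ‖a‖ ^ 2)
    (h4 : ∀ a : EuclideanSpace ℝ (Fin k), ‖a‖ = 1 → ∀ t : ℝ, |t| ≤ n →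
      (n : ℝ) / 128 ≤ ∑ i ∈ Sᶜ, |(∑ j, a j * ω j i) - t * u i|)
    (a : EuclideanSpace ℝ (Fin k)) (h : Fin n → ℝ)
    (hh : ∀ i, h i = (∑ j, a j * ω j i) - (∑ j, a j * ω j istar) * u i)
    (hmin : ∑ i, |u i + h i| ≤ ∑ i, |u i|) :
    l2 h ≤ 5000 * (√n / s) * ∑ i ∈ Sᶜ, |u i| := by
  set t := ∑ j, a j * ω j istar with ht
  set σ := ∑ i ∈ Sᶜ, |u i| with hσ
  have hn0 : (0 : ℝ) < n := by exact_mod_cast hs.trans_le hsn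
  have hs0 : (0 : ℝ) < s := by exact_mod_cast hs
  have hsn' : (s : ℝ) ≤ n := by exact_mod_cast hsn
  have hσ0 : 0 ≤ σ := Finset.sum_nonneg fun i _ => abs_nonneg _
  have htsq : t ^ 2 ≤ ‖a‖ ^ 2 * (16 * q ^ 2) := by
    rcases Nat.eq_zero_or_pos k with rfl | hk
    · simp [ht]; positivity
    · have hk0 : (0 : ℝ) < k := by exact_mod_cast hk
      have := sq_combination_le a (fun j => ω j istar) (16 * q ^ 2 / k) fun j => by
        rw [le_div_iff₀ hk0]; linarith [h1 j]
      rwa [mul_div_cancel₀ _ hk0.ne'] at this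
  have htabs : |t| ≤ 4 * q * ‖a‖ := by
    refine abs_le_of_sq_le_sq ?_ (by positivity)
    linarith
  have hSpart : ∑ i ∈ S, |h i| ≤ n / 256 * ‖a‖ := by
    have hrow : ∀ j, (∑ i ∈ S, |ω j i|) ^ 2 ≤ 9 * s ^ 2 := fun j => by
      refine sq_sum_le_card_mul_sum_sq.trans ?_
      simp only [sq_abs, hS]
      nlinarith [h2 j]
    have ha1 : (∑ j, |a j| * ∑ i ∈ S, |ω j i|) ≤ 3 * s * q * ‖a‖ := by
      refine abs_le_of_sq_le_sq' ?_ (by positivity) |>.2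
      have := sq_combination_le (WithLp.toLp 2 fun j => |a j|) (fun j => ∑ i ∈ S, |ω j i|)
        (9 * s ^ 2) hrow
      rw [EuclideanSpace.real_norm_sq_eq] at this
      simp only [sq_abs] at this
      rw [← EuclideanSpace.real_norm_sq_eq] at this
      refine this.trans ?_
      calc ‖a‖ ^ 2 * (k * (9 * s ^ 2)) ≤ ‖a‖ ^ 2 * (q ^ 2 * (9 * s ^ 2)) := by gcongr
        _ = (3 * s * q * ‖a‖) ^ 2 := by ring
    have hpt : ∀ i ∈ S, |h i| ≤ (∑ j, |a j| * |ω j i|) + 4 * q * ‖a‖ := fun i _ => by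
      rw [hh i]
      refine (abs_sub _ _).trans (add_le_add ?_ ?_)
      · refine (Finset.abs_sum_le_sum_abs _ _).trans_eq ?_
        simp only [abs_mul]
      · rw [abs_mul]
        calc |t| * |u i| ≤ 4 * q * ‖a‖ * 1 :=
              mul_le_mul htabs (hu i) (abs_nonneg _) (by positivity)
          _ = _ := mul_one _
    calc ∑ i ∈ S, |h i| ≤ ∑ i ∈ S, ((∑ j, |a j| * |ω j i|) + 4 * q * ‖a‖) :=
          Finset.sum_le_sum hpt
      _ = (∑ j, |a j| * ∑ i ∈ S, |ω j i|) + s * (4 * q * ‖a‖) := by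
          rw [Finset.sum_add_distrib, Finset.sum_comm, Finset.sum_const, hS, nsmul_eq_mul]
          simp_rw [Finset.mul_sum]
      _ ≤ 3 * s * q * ‖a‖ + s * (4 * q * ‖a‖) := by gcongr
      _ = 7 * (s * q) * ‖a‖ := by ring
      _ ≤ n / 256 * ‖a‖ := by gcongr; linarith
  have hSc : (n : ℝ) / 128 * ‖a‖ ≤ ∑ i ∈ Sᶜ, |h i| := by
    rcases eq_or_ne a 0 with rfl | ha
    · simp only [norm_zero, mul_zero]
      exact Finset.sum_nonneg fun i _ => abs_nonneg _
    · have hna : 0 < ‖a‖ := norm_pos_iff.2 ha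
      have := h4 (‖a‖⁻¹ • a) (by rw [norm_smul, norm_inv, norm_norm, inv_mul_cancel₀ hna.ne'])
        (‖a‖⁻¹ * t) (by
          rw [abs_mul, abs_inv, abs_norm, inv_mul_le_iff₀ hna]
          nlinarith)
      rw [mul_comm, ← le_inv_mul_iff₀ hna, Finset.mul_sum]
      refine this.trans_eq (Finset.sum_congr rfl fun i _ => ?_)
      rw [← abs_of_pos (inv_pos.2 hna), ← abs_mul, hh i, abs_of_pos (inv_pos.2 hna)]
      congr 1
      simp only [PiLp.smul_apply, smul_eq_mul, mul_assoc, ← Finset.mul_sum]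
      ring
  have hnsp := null_space_property S u h hmin (by linarith)
  have hna : n * ‖a‖ ≤ 512 * σ := by linarith
  have hl2 : ∑ i, h i ^ 2 ≤ (72 + 32 * q ^ 2) * n * ‖a‖ ^ 2 := by
    have hpt : ∀ i, h i ^ 2 ≤ 2 * (∑ j, a j * ω j i) ^ 2 + 2 * t ^ 2 := fun i => by
      have hu2 : u i ^ 2 ≤ 1 := (sq_le_one_iff_abs_le_one _).2 (hu i)
      rw [hh i]
      nlinarith [sq_nonneg ((∑ j, a j * ω j i) + t * u i), sq_nonneg t]
    calc ∑ i, h i ^ 2 ≤ ∑ i, (2 * (∑ j, a j * ω j i) ^ 2 + 2 * t ^ 2) :=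
          Finset.sum_le_sum fun i _ => hpt i
      _ = 2 * (∑ i, (∑ j, a j * ω j i) ^ 2) + n * (2 * t ^ 2) := by
          rw [Finset.sum_add_distrib, ← Finset.mul_sum]; simp
      _ ≤ 2 * (36 * n * ‖a‖ ^ 2) + n * (2 * (‖a‖ ^ 2 * (16 * q ^ 2))) := by
          gcongr; exact h3 a
      _ = _ := by ring
  have hsq2 : (s * q) ^ 2 ≤ (n / 2048) ^ 2 := by gcongr
  have hs2 : (s : ℝ) ^ 2 ≤ n ^ 2 := by gcongr
  have hna2 : (n * ‖a‖) ^ 2 ≤ (512 * σ) ^ 2 := by gcongr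
  unfold l2
  refine Real.sqrt_le_iff.2 ⟨by positivity, ?_⟩
  refine hl2.trans ?_
  rw [mul_pow, mul_pow, div_pow, Real.sq_sqrt hn0.le, ← mul_div_assoc, div_mul_eq_mul_div,
    le_div_iff₀ (by positivity)]
  have e1 : (72 + 32 * q ^ 2) * s ^ 2 ≤ 81 * (n : ℝ) ^ 2 := by nlinarith
  calc (72 + 32 * q ^ 2) * n * ‖a‖ ^ 2 * s ^ 2
      = ((72 + 32 * q ^ 2) * s ^ 2) * (n * ‖a‖ ^ 2) := by ring
    _ ≤ (81 * (n : ℝ) ^ 2) * (n * ‖a‖ ^ 2) := by gcongr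
    _ = 81 * n * (n * ‖a‖) ^ 2 := by ring
    _ ≤ 81 * n * (512 * σ) ^ 2 := by gcongr
    _ ≤ 5000 ^ 2 * n * σ ^ 2 := by
      have : 0 ≤ n * σ ^ 2 := by positivity
      nlinarith

/-! ### Probabilities of the exceptional events -/

/-- Union bound in `ℝ≥0∞` with a real bound on each event. -/
lemma union_bound {α ι : Type*} [MeasurableSpace α] (μ : Measure α) (T : Finset ι)
    (A : ι → Set α) (p : ℝ) (hA : ∀ i ∈ T, μ (A i) ≤ ENNReal.ofReal p) :
    μ (⋃ i ∈ T, A i) ≤ ENNReal.ofReal (T.card * p) := by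
  refine (measure_biUnion_finset_le _ _).trans ((Finset.sum_le_sum hA).trans_eq ?_)
  rw [Finset.sum_const, nsmul_eq_mul, ENNReal.ofReal_mul (by positivity), ENNReal.ofReal_natCast]

lemma measure_coordinate {n k : ℕ} (j : Fin k) {A : Set (Fin n → ℝ)} (hA : MeasurableSet A) :
    (Measure.pi fun _ : Fin k => stdGaussianVec n) {ω | ω j ∈ A} = stdGaussianVec n A :=
  (measurePreserving_eval (fun _ : Fin k => stdGaussianVec n) j).measure_preimage
    hA.nullMeasurableSet

/-- The `i*`-th entries are all `O(√(log n))`. -/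
lemma prob_istar {n k : ℕ} (hn : 2 ≤ n) (istar : Fin n) :
    (Measure.pi fun _ : Fin k => stdGaussianVec n)
      (⋃ j ∈ (Finset.univ : Finset (Fin k)), {ω | 16 * log n ≤ ω j istar ^ 2})
      ≤ ENNReal.ofReal (k / (n : ℝ) ^ 2) := by
  have hn0 : (0 : ℝ) < n := by positivity
  have hn2 : (2 : ℝ) ≤ n := by exact_mod_cast hn
  refine (union_bound _ _ _ (1 / (n : ℝ) ^ 2) fun j _ => ?_).trans_eq (by simp [div_eq_mul_inv])
  have hm : MeasurableSet {x : Fin n → ℝ | 16 * log n ≤ ∑ i ∈ {istar}, x i ^ 2} :=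
    measurableSet_le (by fun_prop) (by fun_prop)
  have h := chi_sq_tail {istar} (16 * log n)
  rw [← measure_coordinate j hm] at h
  simp only [Finset.sum_singleton, Set.mem_ofPred_eq, Finset.card_singleton, pow_one] at h
  refine h.trans (ENNReal.ofReal_le_ofReal ?_)
  have h5 : exp (-(16 * log n / 4)) = 1 / (n : ℝ) ^ 4 := by
    rw [show -(16 * log n / 4) = -(4 * log n) by ring, exp_neg, one_div]
    congr 1
    rw [show (4 : ℝ) * log n = ((4 : ℕ) : ℝ) * log n by norm_num, exp_nat_mul, exp_log hn0]
  rw [h5, div_mul_eq_mul_div, div_le_div_iff₀ (by positivity) (by positivity)]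
  have h6 : (4 : ℝ) ≤ (n : ℝ) ^ 2 := by nlinarith
  nlinarith

/-- The restrictions to `S` of all the Gaussian vectors have Euclidean norm `O(√s)`. -/
lemma prob_support {n k s : ℕ} (S : Finset (Fin n)) (hS : S.card = s) :
    (Measure.pi fun _ : Fin k => stdGaussianVec n)
      (⋃ j ∈ (Finset.univ : Finset (Fin k)), {ω | 9 * (s : ℝ) ≤ ∑ i ∈ S, ω j i ^ 2})
      ≤ ENNReal.ofReal (k * exp (-(s : ℝ))) := by
  refine (union_bound _ _ _ (exp (-(s : ℝ))) fun j _ => ?_).trans_eq (by simp)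
  have hm : MeasurableSet {x : Fin n → ℝ | 9 * (s : ℝ) ≤ ∑ i ∈ S, x i ^ 2} :=
    measurableSet_le (by fun_prop) (by fun_prop)
  have h := chi_sq_tail S (9 * s)
  rw [← measure_coordinate j hm] at h
  refine h.trans (ENNReal.ofReal_le_ofReal ?_)
  have h1 : (3 / 2 : ℝ) ≤ exp (1 / 2) := by
    have := add_one_le_exp (1 / 2 : ℝ); linarith
  calc exp (-(9 * (s : ℝ) / 4)) * (3 / 2) ^ S.card
      ≤ exp (-(9 * (s : ℝ) / 4)) * exp (1 / 2) ^ S.card := by gcongr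
    _ = exp (-(9 * (s : ℝ) / 4) + s * (1 / 2)) := by rw [hS, ← exp_nat_mul, exp_add]
    _ ≤ exp (-(s : ℝ)) := by
      rw [exp_le_exp]
      have : (0 : ℝ) ≤ s := by positivity
      linarith

/-- Failure probability of the hypothesis of `op_bound`; a `1 / 2`-net has at most `5ᵏ` points. -/
lemma prob_op {n k : ℕ} (hk : (k : ℝ) ≤ (n : ℝ) / 32) (T : Finset (EuclideanSpace ℝ (Fin k)))
    (hT1 : ∀ a ∈ T, ‖a‖ = 1) (hT : (T.card : ℝ) ≤ 5 ^ k) :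
    (Measure.pi fun _ : Fin k => stdGaussianVec n)
      (⋃ b ∈ T, {ω | 9 * (n : ℝ) ≤ ∑ i, (∑ j, b j * ω j i) ^ 2})
      ≤ ENNReal.ofReal (exp (-(1 / 4) * n)) := by
  refine (union_bound _ _ _ (exp (-(9 * (n : ℝ) / 4)) * (3 / 2) ^ n) fun b hb => ?_).trans
    (ENNReal.ofReal_le_ofReal ?_)
  · have hm : MeasurableSet {x : Fin n → ℝ | 9 * (n : ℝ) ≤ ∑ i, x i ^ 2} :=
      measurableSet_le (by fun_prop) (by fun_prop)
    have h := chi_sq_tail (Finset.univ : Finset (Fin n)) (9 * n)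
    rw [← measure_combination b (hT1 b hb) hm] at h
    simpa using h
  · have h1 : (3 / 2 : ℝ) ≤ exp (1 / 2) := by
      have := add_one_le_exp (1 / 2 : ℝ); linarith
    have h2 : (5 : ℝ) ≤ exp 2 := by
      rw [show (2 : ℝ) = (2 : ℕ) * 1 by norm_num, exp_nat_mul]
      have := exp_one_gt_d9
      nlinarith
    calc (T.card : ℝ) * (exp (-(9 * (n : ℝ) / 4)) * (3 / 2) ^ n)
        ≤ exp 2 ^ k * (exp (-(9 * (n : ℝ) / 4)) * exp (1 / 2) ^ n) := by
          gcongr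
          exact hT.trans (by gcongr)
      _ = exp (k * 2 + (-(9 * (n : ℝ) / 4) + n * (1 / 2))) := by
          rw [← exp_nat_mul, ← exp_nat_mul, exp_add, exp_add]
      _ ≤ exp (-(1 / 4) * n) := by
          rw [exp_le_exp]
          have : (0 : ℝ) ≤ n := by positivity
          linarith

/-- Failure probability of the hypothesis of `l1_lower`; a `1 / 1536`-net has at most `3073ᵏ` points,
and the grid for `t` has `512 n + 1`. -/
lemma prob_l1 {n k : ℕ} (hk : (k : ℝ) ≤ (n : ℝ) / 32)
    (hn : (512 * n + 1 : ℝ) ≤ exp (n / 4)) (S : Finset (Fin n)) (hS : n ≤ 2 * S.card)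
    (u : Fin n → ℝ) (T : Finset (EuclideanSpace ℝ (Fin k)))
    (hT1 : ∀ a ∈ T, ‖a‖ = 1) (hT : (T.card : ℝ) ≤ 3073 ^ k) :
    (Measure.pi fun _ : Fin k => stdGaussianVec n)
      (⋃ p ∈ T ×ˢ Finset.Icc (-(256 * n : ℤ)) (256 * n),
        {ω | ∑ i ∈ S, |(∑ j, p.1 j * ω j i) - (p.2 : ℝ) / 256 * u i| ≤ n / 64})
      ≤ ENNReal.ofReal (exp (-(1 / 4) * n)) := by
  refine (union_bound _ _ _ (exp n * (1 / 64) ^ S.card) fun p hp => ?_).trans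
    (ENNReal.ofReal_le_ofReal ?_)
  · have hm : MeasurableSet
        {x : Fin n → ℝ | ∑ i ∈ S, |x i - (p.2 : ℝ) / 256 * u i| ≤ (n : ℝ) / 64} :=
      measurableSet_le (by fun_prop) (by fun_prop)
    have h := small_ball S (fun i => (p.2 : ℝ) / 256 * u i)
    rw [← measure_combination p.1 (hT1 p.1 (Finset.mem_product.1 hp).1) hm] at h
    exact h
  · have h1 : (1 / 64 : ℝ) ≤ exp (-4) := by
      rw [exp_neg, one_div]
      gcongr
      rw [show (4 : ℝ) = (4 : ℕ) * 1 by norm_num, exp_nat_mul]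
      have := exp_one_lt_d9
      calc exp 1 ^ 4 ≤ 2.72 ^ 4 := by gcongr; linarith
        _ ≤ 64 := by norm_num
    have h2 : (3073 : ℝ) ≤ exp 9 := by
      rw [show (9 : ℝ) = (9 : ℕ) * 1 by norm_num, exp_nat_mul]
      have := exp_one_gt_d9
      calc (3073 : ℝ) ≤ 2.7 ^ 9 := by norm_num
        _ ≤ exp 1 ^ 9 := by gcongr; linarith
    have hS' : (n : ℝ) ≤ 2 * S.card := by exact_mod_cast hS
    have hcard : ((Finset.Icc (-(256 * n : ℤ)) (256 * n)).card : ℝ) = 512 * n + 1 := by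
      rw [Int.card_Icc]
      have : (256 * (n : ℤ) + 1 - -(256 * (n : ℤ))).toNat = 512 * n + 1 := by omega
      rw [this]; push_cast; ring
    rw [Finset.card_product, Nat.cast_mul, hcard]
    calc (T.card : ℝ) * (512 * n + 1) * (exp n * (1 / 64) ^ S.card)
        ≤ exp 9 ^ k * exp (n / 4) * (exp n * exp (-4) ^ S.card) := by
          gcongr
          exact hT.trans (by gcongr)
      _ = exp (k * 9 + n / 4 + (n + S.card * (-4))) := by
          rw [← exp_nat_mul, ← exp_nat_mul, exp_add, exp_add, exp_add]
      _ ≤ exp (-(1 / 4) * n) := by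
          rw [exp_le_exp]
          have : (0 : ℝ) ≤ n := by positivity
          linarith

lemma eventually_large : ∃ N : ℕ, ∀ n : ℕ, N ≤ n →
    3 ≤ n ∧ (512 * n + 1 : ℝ) ≤ exp (n / 4) := by
  have h := (tendsto_exp_div_pow_atTop 1).eventually_ge_atTop (4 * 513)
  have h2 : Filter.Tendsto (fun n : ℕ => (n : ℝ) / 4) Filter.atTop Filter.atTop :=
    tendsto_natCast_atTop_atTop.atTop_div_const (by norm_num)
  obtain ⟨N, hN⟩ := Filter.eventually_atTop.1 ((h2.eventually h).and (Filter.eventually_ge_atTop 3))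
  refine ⟨N, fun n hn => ?_⟩
  obtain ⟨h3, h4⟩ := hN n hn
  have h5 : (3 : ℝ) ≤ n := by exact_mod_cast h4
  refine ⟨h4, ?_⟩
  rw [pow_one, le_div_iff₀ (by positivity)] at h3
  linarith

/-! ### Stable recovery -/

/-- A member of `span {v, ω₁, …, ωₖ}` with `i*`-th entry `1` differs from `v / v(i*)` by a vector of
the form required in `error_bound`. -/
lemma exists_coefficients {n k : ℕ} (v : Fin n → ℝ) (ω : Fin k → Fin n → ℝ) (istar : Fin n)
    (hv : v istar ≠ 0) (z : Fin n → ℝ) (hz : z ∈ Submodule.span ℝ (insert v (Set.range ω)))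
    (hz1 : z istar = 1) :
    ∃ a : EuclideanSpace ℝ (Fin k), ∀ i, (z - (v istar)⁻¹ • v) i =
      (∑ j, a j * ω j i) - (∑ j, a j * ω j istar) * ((v istar)⁻¹ • v) i := by
  obtain ⟨t, y, hy, rfl⟩ := Submodule.mem_span_insert.1 hz
  obtain ⟨a, rfl⟩ := (Submodule.mem_span_range_iff_exists_fun ℝ).1 hy
  refine ⟨WithLp.toLp 2 a, fun i => ?_⟩
  simp only [Pi.add_apply, Pi.smul_apply, smul_eq_mul, Finset.sum_apply, Pi.sub_apply] at hz1 ⊢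
  have : ∑ j, a j * ω j istar = 1 - t * v istar := by linarith
  rw [this]
  field_simp
  ring

/-- There exist universal constants `c, C, γ₁, γ₂ > 0` such that for all
sufficiently large `n`: if `k ≤ n/32` is a positive integer, `s` is any positive integer with
`s ≤ c n / (√k √(log n))`, `v ∈ ℝⁿ` is nonzero with best `s`-sparse approximation `v_s`,
`ṽ₁, …, ṽ_k` are i.i.d. standard Gaussian vectors, `W = span{v, ṽ₁, …, ṽ_k}`, and
`|v(i*)| = ‖v‖_∞`, then with probability at least `1 − γ₁ e^{−γ₂ n} − k e^{−s} − k/n²`, every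
minimizer `z#` of `‖z‖₁` over `{z ∈ W : z(i*) = 1}` satisfies
`‖z# − v/v(i*)‖₂ ≤ C (√n / s) ‖v − v_s‖₁ / ‖v‖_∞`. -/
theorem stable_recovery_scaling_law_general_s :
    ∃ c C γ₁ γ₂ : ℝ, 0 < c ∧ 0 < C ∧ 0 < γ₁ ∧ 0 < γ₂ ∧ ∃ N : ℕ, ∀ n : ℕ, N ≤ n →
      ∀ k : ℕ, 0 < k → (k : ℝ) ≤ (n : ℝ) / 32 →
      ∀ s : ℕ, 0 < s → (s : ℝ) ≤ c * n / (Real.sqrt k * Real.sqrt (Real.log n)) →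
      ∀ v : Fin n → ℝ, v ≠ 0 →
      ∀ vs : Fin n → ℝ, IsBestSparseApprox s v vs →
      ∀ istar : Fin n, (∀ i, |v i| ≤ |v istar|) →
      (Measure.pi fun _ : Fin k => stdGaussianVec n)
        {ω : Fin k → Fin n → ℝ |
          ∀ z : Fin n → ℝ, z ∈ Submodule.span ℝ (insert v (Set.range ω)) →
            z istar = 1 →
            (∀ w : Fin n → ℝ, w ∈ Submodule.span ℝ (insert v (Set.range ω)) →
              w istar = 1 → l1 z ≤ l1 w) →
            l2 (z - (v istar)⁻¹ • v) ≤
              C * (Real.sqrt n / (s : ℝ)) * (l1 (v - vs) / |v istar|)} ≥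
      ENNReal.ofReal (1 - γ₁ * Real.exp (-γ₂ * n)
        - k * Real.exp (-(s : ℝ)) - (k : ℝ) / (n : ℝ) ^ 2) := by
  obtain ⟨N, hN⟩ := eventually_large
  refine ⟨1 / 2048, 5000, 2, 1 / 4, by norm_num, by norm_num, by norm_num, by norm_num, N, ?_⟩
  intro n hNn k hk hkn s hs hsc v hv vs hvs istar hmax
  obtain ⟨hn3, hexp⟩ := hN n hNn
  obtain ⟨S, hScard, hSin, hSout, -⟩ := hvs
  have hn0 : (0 : ℝ) < n := by positivity
  have hn3' : (3 : ℝ) ≤ n := by exact_mod_cast hn3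
  have hlog : 1 ≤ log n := by
    rw [le_log_iff_exp_le hn0]
    linarith [exp_one_lt_d9]
  have hlogn : log n ≤ n := (log_le_sub_one_of_pos hn0).trans (by linarith)
  have hk1 : (1 : ℝ) ≤ k := by exact_mod_cast hk
  set q := √k * √(log n) with hq
  have hqsq : q ^ 2 = k * log n := by
    rw [hq, mul_pow, Real.sq_sqrt (by positivity), Real.sq_sqrt (by positivity)]
  have hq1 : 1 ≤ q := by
    rw [hq]
    exact one_le_mul_of_one_le_of_one_le (Real.one_le_sqrt.2 hk1) (Real.one_le_sqrt.2 hlog)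
  have hsq : s * q ≤ n / 2048 := by
    rw [le_div_iff₀ (by positivity)] at hsc
    linarith
  have hs2048 : (s : ℝ) ≤ n / 2048 := by
    refine le_trans ?_ hsq
    nlinarith [(Nat.cast_nonneg s : (0 : ℝ) ≤ s)]
  have hs2 : 2 * s ≤ n := by
    have : (2 : ℝ) * s ≤ n := by linarith
    exact_mod_cast this
  have hvi : v istar ≠ 0 := fun h0 => hv <| funext fun i => by
    have := hmax i
    rw [h0, abs_zero] at this
    exact abs_nonpos_iff.1 this
  set u := (v istar)⁻¹ • v with hu
  have hu1 : ∀ i, |u i| ≤ 1 := fun i => by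
    rw [hu, Pi.smul_apply, smul_eq_mul, abs_mul, abs_inv,
      inv_mul_le_iff₀ (abs_pos.2 hvi), mul_one]
    exact hmax i
  have hσ : l1 (v - vs) / |v istar| = ∑ i ∈ Sᶜ, |u i| := by
    unfold l1
    rw [← Finset.sum_add_sum_compl S, Finset.sum_eq_zero (s := S), zero_add, Finset.sum_div]
    · refine Finset.sum_congr rfl fun i hi => ?_
      rw [Pi.sub_apply, hSout i (Finset.mem_compl.1 hi), sub_zero, hu, Pi.smul_apply, smul_eq_mul,
        abs_mul, abs_inv, div_eq_inv_mul]
    · intro i hi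
      rw [Pi.sub_apply, hSin i hi, sub_self, abs_zero]
  obtain ⟨T, hT1, hTnet, hTcard⟩ := exists_net k (1 / 2) (by norm_num)
  obtain ⟨T', hT1', hTnet', hTcard'⟩ := exists_net k (1 / 1536) (by norm_num)
  have hP1 := prob_istar (k := k) (by omega) istar
  have hP2 := prob_support (k := k) S hScard
  have hP3 := prob_op hkn T hT1 (hTcard.trans_eq (by norm_num))
  have hP4 := prob_l1 hkn hexp Sᶜ
    (by rw [Finset.card_compl, hScard, Fintype.card_fin]; omega) u T' hT1'
    (hTcard'.trans_eq (by norm_num))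
  set A1 := ⋃ j ∈ (Finset.univ : Finset (Fin k)),
    {ω : Fin k → Fin n → ℝ | 16 * log n ≤ ω j istar ^ 2} with hA1
  set A2 := ⋃ j ∈ (Finset.univ : Finset (Fin k)),
    {ω : Fin k → Fin n → ℝ | 9 * (s : ℝ) ≤ ∑ i ∈ S, ω j i ^ 2} with hA2
  set A3 := ⋃ b ∈ T, {ω : Fin k → Fin n → ℝ | 9 * (n : ℝ) ≤ ∑ i, (∑ j, b j * ω j i) ^ 2} with hA3
  set A4 := ⋃ p ∈ T' ×ˢ Finset.Icc (-(256 * n : ℤ)) (256 * n), {ω : Fin k → Fin n → ℝ |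
    ∑ i ∈ Sᶜ, |(∑ j, p.1 j * ω j i) - (p.2 : ℝ) / 256 * u i| ≤ n / 64} with hA4
  set G := {ω : Fin k → Fin n → ℝ |
          ∀ z : Fin n → ℝ, z ∈ Submodule.span ℝ (insert v (Set.range ω)) →
            z istar = 1 →
            (∀ w : Fin n → ℝ, w ∈ Submodule.span ℝ (insert v (Set.range ω)) →
              w istar = 1 → l1 z ≤ l1 w) →
            l2 (z - u) ≤ 5000 * (√n / (s : ℝ)) * (l1 (v - vs) / |v istar|)} with hG
  have hcover : (Set.univ : Set (Fin k → Fin n → ℝ)) ⊆ G ∪ (A1 ∪ A2 ∪ (A3 ∪ A4)) := by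
    intro ω _
    by_contra hω
    simp only [Set.mem_union, not_or] at hω
    obtain ⟨hωG, ⟨hω1, hω2⟩, hω3, hω4⟩ := hω
    simp only [hA1, hA2, hA3, hA4, Set.mem_iUnion, Set.mem_ofPred_eq, not_exists, not_le,
      Finset.mem_univ, forall_true_left] at hω1 hω2 hω3 hω4
    refine hωG ?_
    intro z hz hz1 hzmin
    obtain ⟨a, ha⟩ := exists_coefficients v ω istar hvi z hz hz1
    have hop := op_bound ω T hTnet fun b hb => (hω3 b hb).le
    have hlow := l1_lower ω Sᶜ u hu1 T' hTnet' hop fun b hb m hm =>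
      (hω4 (b, m) (Finset.mem_product.2 ⟨hb, hm⟩)).le
    have huW : u ∈ Submodule.span ℝ (insert v (Set.range ω)) :=
      Submodule.smul_mem _ _ (Submodule.subset_span (Set.mem_insert _ _))
    have hmin := hzmin u huW (by
      rw [hu, Pi.smul_apply, smul_eq_mul, inv_mul_cancel₀ hvi])
    rw [hσ]
    refine error_bound hs q (by linarith) ?_ ?_ hsq (by omega) ω S hScard u hu1 istar ?_
      (fun j => (hω2 j).le) hop hlow a (z - u) ha ?_
    · rw [hqsq]; nlinarith
    · refine abs_le_of_sq_le_sq' ?_ hn0.le |>.2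
      rw [mul_pow, hqsq]
      nlinarith
    · intro j
      rw [hqsq]
      nlinarith [hω1 j]
    · unfold l1 at hmin
      simpa using hmin
  set μ := Measure.pi fun _ : Fin k => stdGaussianVec n with hμ
  have hone : (1 : ENNReal) ≤ μ G + ENNReal.ofReal (2 * exp (-(1 / 4) * n)
      + k * exp (-(s : ℝ)) + (k : ℝ) / (n : ℝ) ^ 2) := by
    calc (1 : ENNReal) = μ Set.univ := measure_univ.symm
      _ ≤ μ (G ∪ (A1 ∪ A2 ∪ (A3 ∪ A4))) := measure_mono hcover
      _ ≤ μ G + ((μ A1 + μ A2) + (μ A3 + μ A4)) := by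
          refine (measure_union_le _ _).trans (add_le_add le_rfl ?_)
          exact (measure_union_le _ _).trans
            (add_le_add (measure_union_le _ _) (measure_union_le _ _))
      _ ≤ μ G + ((ENNReal.ofReal (k / (n : ℝ) ^ 2) + ENNReal.ofReal (k * exp (-(s : ℝ))))
          + (ENNReal.ofReal (exp (-(1 / 4) * n)) + ENNReal.ofReal (exp (-(1 / 4) * n)))) := by
          gcongr
      _ = _ := by
          rw [← ENNReal.ofReal_add (by positivity) (by positivity),
            ← ENNReal.ofReal_add (by positivity) (by positivity),
            ← ENNReal.ofReal_add (by positivity) (by positivity)]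
          congr 2
          ring
  rw [ge_iff_le, sub_sub, sub_sub, ENNReal.ofReal_sub _ (by positivity), ENNReal.ofReal_one]
  refine tsub_le_iff_right.2 (hone.trans_eq ?_)
  congr 2
  ring
end
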